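/- arXiv:0909.2388 — 2 statements merged into one kernel-verified Lean document; each statement's English description precedes it below -/
import Mathlib

section
/- Let G be a finite abelian group of order n with Davenport constant D(G). Let S be a sequence in G of length t ≥ n + D(G) − 1 such that the element 0 attains the maximal multiplicity of S. Then there exists a subsequence S_1 of S with |S_1| ≥ t + 1 − D(G) such that 0 ∈ Σ_k(S_1) for every 1 ≤ k ≤ |S_1|, where Σ_k(S_1) denotes the set of sums of k-term subsequences of S_1. -/
open scoped Pointwise in
/-- Scherk's theorem. -/
theorem scherk_aux {G : Type*} [AddCommGroup G] [Fintype G] [DecidableEq G] :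
    ∀ (m : ℕ) (A B : Finset G), B.card ≤ m → (0 : G) ∈ A → (0 : G) ∈ B →
      (∀ a ∈ A, ∀ b ∈ B, a + b = 0 → b = 0) → A.card + B.card ≤ (A + B).card + 1 := by
  intro m
  induction m with
  | zero =>
    intro A B hm _ hB _
    have := Finset.card_pos.mpr ⟨_, hB⟩
    omega
  | succ m ih =>
    intro A B hm hA hB hu
    by_cases h1 : ∀ b ∈ B, b = 0
    · have : B = {0} := by
        ext b; simp only [Finset.mem_singleton]
        exact ⟨h1 b, fun h => h ▸ hB⟩
      subst this
      simp
    push Not at h1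
    obtain ⟨b, hb, hb0⟩ := h1
    by_cases h2 : ∀ e ∈ A, e + b ∈ A
    · exfalso
      have h3 : ∀ k : ℕ, k • b ∈ A := by
        intro k
        induction k with
        | zero => simpa using hA
        | succ k ihk => rw [succ_nsmul]; exact h2 _ ihk
      apply hb0
      refine hu _ (h3 (Fintype.card G - 1)) b hb ?_
      rw [← succ_nsmul, Nat.sub_add_cancel Fintype.card_pos, card_nsmul_eq_zero]
    push Not at h2
    obtain ⟨e, he, heb⟩ := h2
    let E : Finset G := B.image (fun c => e + c)
    let A' := A ∪ E
    let F := B.filter (fun c => e + c ∈ A)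
    have hF : F.card = (A ∩ E).card := by
      have : A ∩ E = F.image (fun c => e + c) := by
        ext z
        simp only [E, F, Finset.mem_inter, Finset.mem_image, Finset.mem_filter]
        constructor
        · rintro ⟨h, c, hc, rfl⟩; exact ⟨c, ⟨hc, h⟩, rfl⟩
        · rintro ⟨c, ⟨hc, h⟩, rfl⟩; exact ⟨h, c, hc, rfl⟩
      rw [this, Finset.card_image_of_injective _ (add_right_injective e)]
    have hE : E.card = B.card := Finset.card_image_of_injective _ (add_right_injective e)
    have hsum : A'.card + F.card = A.card + B.card := by
      rw [hF, ← hE]; exact Finset.card_union_add_card_inter A E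
    have hlt : F.card < B.card := by
      apply Finset.card_lt_card
      rw [Finset.ssubset_iff_of_subset (Finset.filter_subset _ _)]
      exact ⟨b, hb, by simp [F, heb]⟩
    have hsub : A' + F ⊆ A + B := by
      intro z hz
      obtain ⟨a, ha, f, hf, rfl⟩ := Finset.mem_add.mp hz
      simp only [F, Finset.mem_filter] at hf
      rcases Finset.mem_union.mp ha with ha | ha
      · exact Finset.add_mem_add ha hf.1
      · obtain ⟨c, hc, rfl⟩ := Finset.mem_image.mp ha
        have : e + c + f = (e + f) + c := by abel
        rw [this]
        exact Finset.add_mem_add hf.2 hc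
    have := ih A' F (by omega) (Finset.mem_union_left _ hA) (by simp [F, hB, he]) (by
      intro a ha f hf haf
      simp only [F, Finset.mem_filter] at hf
      rcases Finset.mem_union.mp ha with ha | ha
      · exact hu a ha f hf.1 haf
      · obtain ⟨c, hc, rfl⟩ := Finset.mem_image.mp ha
        have hc0 : c = 0 := hu _ hf.2 c hc (by rw [← haf]; abel)
        subst hc0
        exact hu e he f hf.1 (by simpa using haf))
    have := Finset.card_le_card hsub
    omega

open scoped Pointwise in
/-- A sequence of length at least `|G|` has a short zero-sum subsequence. -/
theorem short_zero_sum {G : Type*} [AddCommGroup G] [Fintype G] [DecidableEq G]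
    (t : ℕ) (x : Fin t → G) (W : Finset (Fin t)) (h : ℕ)
    (hW : Fintype.card G ≤ W.card)
    (hh : ∀ g : G, (W.filter (fun i => x i = g)).card ≤ h) :
    ∃ u ⊆ W, u.Nonempty ∧ u.card ≤ h ∧ ∑ i ∈ u, x i = 0 := by
  by_contra hcon
  let r : Fin t → ℕ := fun i => (W.filter (fun j => j < i ∧ x j = x i)).card
  have hr : ∀ i ∈ W, r i < h := by
    intro i hi
    refine lt_of_lt_of_le (Finset.card_lt_card ?_) (hh (x i))
    rw [Finset.ssubset_iff_of_subset]
    · exact ⟨i, by simp [hi], by simp⟩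
    · intro j hj
      simp only [Finset.mem_filter] at hj ⊢
      exact ⟨hj.1, hj.2.2⟩
  have hlt : ∀ i ∈ W, ∀ j ∈ W, x i = x j → i < j → r i < r j := by
    intro i hi j hj hij hlt
    apply Finset.card_lt_card
    rw [Finset.ssubset_iff_of_subset]
    · exact ⟨i, by simp [hi, hlt, hij], by simp⟩
    · intro k hk
      simp only [Finset.mem_filter] at hk ⊢
      exact ⟨hk.1, hk.2.1.trans hlt, hk.2.2.trans hij⟩
  have hinj : ∀ i ∈ W, ∀ j ∈ W, x i = x j → r i = r j → i = j := by
    intro i hi j hj hij hrr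
    rcases lt_trichotomy i j with h1 | h1 | h1
    · have := hlt i hi j hj hij h1; omega
    · exact h1
    · have := hlt j hj i hi hij.symm h1; omega
  have hno : ∀ u ⊆ W, Set.InjOn r u → ∑ i ∈ u, x i = 0 → u = ∅ := by
    intro u hu hui hs
    by_contra hne
    apply hcon
    refine ⟨u, hu, Finset.nonempty_iff_ne_empty.mpr hne, ?_, hs⟩
    have := Finset.card_le_card_of_injOn (t := Finset.range h) r
      (fun i hi => by simpa using hr i (hu hi)) hui
    simpa using this
  classical
  let C : ℕ → Finset G := fun m =>
    (W.powerset.filter (fun u : Finset (Fin t) => Set.InjOn r (u : Set (Fin t)) ∧ ∀ i ∈ u, r i < m)).image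
      (fun u => ∑ i ∈ u, x i)
  have key : ∀ m, (W.filter (fun i => r i < m)).card + 1 ≤ (C m).card := by
    intro m
    induction m with
    | zero =>
      have : (0 : G) ∈ C 0 := Finset.mem_image.mpr ⟨∅, by simp, by simp⟩
      have := Finset.card_pos.mpr ⟨_, this⟩
      simpa using this
    | succ m ih =>
      let V := W.filter (fun i => r i = m)
      let B := insert 0 (V.image x)
      have hV0 : (0 : G) ∉ V.image x := by
        intro hz
        obtain ⟨i, hi, hi0⟩ := Finset.mem_image.mp hz
        have := hno {i} (by simpa using (Finset.mem_filter.mp hi).1) (by simp) (by simpa using hi0)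
        simp at this
      have hB : B.card = V.card + 1 := by
        rw [Finset.card_insert_of_notMem hV0, Finset.card_image_of_injOn]
        intro i hi j hj hij
        have hi := Finset.mem_filter.mp hi
        have hj := Finset.mem_filter.mp hj
        exact hinj i hi.1 j hj.1 hij (hi.2.trans hj.2.symm)
      have hins : ∀ u ⊆ W, Set.InjOn r u → (∀ i ∈ u, r i < m) → ∀ i ∈ V,
          insert i u ⊆ W ∧ Set.InjOn r (insert i u : Finset (Fin t)) ∧
          (∀ j ∈ insert i u, r j < m + 1) ∧
          ∑ j ∈ insert i u, x j = ∑ j ∈ u, x j + x i := by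
        intro u hu hui hum i hi
        have hi := Finset.mem_filter.mp hi
        have hiu : i ∉ u := fun hx => by have := hum i hx; omega
        refine ⟨Finset.insert_subset hi.1 hu, ?_, ?_, ?_⟩
        · rw [Finset.coe_insert, Set.injOn_insert (by simpa using hiu)]
          refine ⟨hui, ?_⟩
          rintro ⟨j, hj, hji⟩
          have := hum j hj
          omega
        · intro j hj
          rcases Finset.mem_insert.mp hj with rfl | hj
          · omega
          · have := hum j hj; omega
        · rw [Finset.sum_insert hiu, add_comm]
      have hS := scherk_aux B.card (C m) B le_rfl
        (Finset.mem_image.mpr ⟨∅, by simp, by simp⟩) (Finset.mem_insert_self _ _) (by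
          intro a ha b hb hab
          obtain ⟨u, hu, rfl⟩ := Finset.mem_image.mp ha
          simp only [Finset.mem_filter, Finset.mem_powerset] at hu
          rcases Finset.mem_insert.mp hb with rfl | hb
          · rfl
          obtain ⟨i, hi, rfl⟩ := Finset.mem_image.mp hb
          obtain ⟨h1, h2, h3, h4⟩ := hins u hu.1 hu.2.1 hu.2.2 i hi
          have := hno _ h1 h2 (h4.trans hab)
          simp at this)
      have hsub : C m + B ⊆ C (m + 1) := by
        intro z hz
        obtain ⟨a, ha, b, hb, rfl⟩ := Finset.mem_add.mp hz
        obtain ⟨u, hu, rfl⟩ := Finset.mem_image.mp ha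
        simp only [Finset.mem_filter, Finset.mem_powerset] at hu
        rcases Finset.mem_insert.mp hb with rfl | hb
        · refine Finset.mem_image.mpr ⟨u, ?_, by simp⟩
          simp only [Finset.mem_filter, Finset.mem_powerset]
          exact ⟨hu.1, hu.2.1, fun i hi => (hu.2.2 i hi).trans (Nat.lt_succ_self m)⟩
        obtain ⟨i, hi, rfl⟩ := Finset.mem_image.mp hb
        obtain ⟨h1, h2, h3, h4⟩ := hins u hu.1 hu.2.1 hu.2.2 i hi
        refine Finset.mem_image.mpr ⟨insert i u, ?_, h4⟩
        simp only [Finset.mem_filter, Finset.mem_powerset]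
        exact ⟨h1, h2, h3⟩
      have h5 := Finset.card_le_card hsub
      have h6 : (W.filter (fun i => r i < m + 1)).card
          ≤ (W.filter (fun i => r i < m)).card + V.card := by
        refine le_trans (Finset.card_le_card ?_) (Finset.card_union_le _ _)
        intro i hi
        simp only [V, Finset.mem_union, Finset.mem_filter] at hi ⊢
        have := hi.2
        by_cases h7 : r i = m
        · exact Or.inr ⟨hi.1, h7⟩
        · exact Or.inl ⟨hi.1, by omega⟩
      omega
  have h1 := key h
  rw [Finset.filter_true_of_mem hr] at h1
  have h2 := Finset.card_le_univ (C h)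
  omega

/-- Adjoining a disjoint zero-sum block which is not too long keeps all lengths. -/
theorem good_union {G : Type*} [AddCommGroup G] (t : ℕ) (x : Fin t → G)
    (A u : Finset (Fin t)) (hdis : Disjoint A u) (hu : ∑ i ∈ u, x i = 0)
    (hc : u.card ≤ A.card)
    (hA : ∀ k ≤ A.card, ∃ v ⊆ A, v.card = k ∧ ∑ i ∈ v, x i = 0) :
    ∀ k ≤ (A ∪ u).card, ∃ v ⊆ A ∪ u, v.card = k ∧ ∑ i ∈ v, x i = 0 := by
  intro k hk
  rw [Finset.card_union_of_disjoint hdis] at hk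
  by_cases h : k ≤ A.card
  · obtain ⟨v, hv, h1, h2⟩ := hA k h
    exact ⟨v, hv.trans Finset.subset_union_left, h1, h2⟩
  · obtain ⟨v, hv, h1, h2⟩ := hA (k - u.card) (by omega)
    have hd : Disjoint v u := hdis.mono_left hv
    refine ⟨v ∪ u, Finset.union_subset_union_left hv, ?_, ?_⟩
    · rw [Finset.card_union_of_disjoint hd]; omega
    · rw [Finset.sum_union hd, h2, hu, add_zero]


/-- Theorem YZ, first part: if `0` attains the maximal multiplicity of a sequence
`S` of length `t ≥ n + D(G) - 1`, then there is a subsequence `S₁` of length at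
least `t + 1 - D(G)` with `0 ∈ Σ_k(S₁)` for all `1 ≤ k ≤ |S₁|`. -/
theorem yz_subsequence {G : Type*} [AddCommGroup G] [Fintype G] [DecidableEq G]
    (n : ℕ) (hn : n = Fintype.card G)
    (D : ℕ)
    (hD : IsLeast {k : ℕ | ∀ y : Fin k → G, ∃ s : Finset (Fin k),
      s.Nonempty ∧ ∑ i ∈ s, y i = 0} D)
    (t : ℕ) (x : Fin t → G) (ht : n + D - 1 ≤ t)
    (h0 : ∀ g : G, (Finset.univ.filter (fun i => x i = g)).card ≤
      (Finset.univ.filter (fun i => x i = 0)).card) :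
    ∃ s₁ : Finset (Fin t), s₁.card + D ≥ t + 1 ∧
      ∀ k : ℕ, 1 ≤ k → k ≤ s₁.card →
        ∃ u ⊆ s₁, u.card = k ∧ ∑ i ∈ u, x i = 0 := by
  classical
  let Z : Finset (Fin t) := Finset.univ.filter (fun i => x i = 0)
  let P : Finset (Finset (Fin t)) := Finset.univ.filter (fun A => Z ⊆ A ∧
    ∀ k ≤ A.card, ∃ v ⊆ A, v.card = k ∧ ∑ i ∈ v, x i = 0)
  have hP : P.Nonempty := by
    refine ⟨Z, ?_⟩
    simp only [P, Finset.mem_filter, Finset.mem_univ, true_and]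
    refine ⟨subset_rfl, fun k hk => ?_⟩
    obtain ⟨v, hv, hvk⟩ := Finset.exists_subset_card_eq hk
    exact ⟨v, hv, hvk, Finset.sum_eq_zero fun i hi => (Finset.mem_filter.mp (hv hi)).2⟩
  obtain ⟨A, hAP, hmax⟩ := Finset.exists_max_image P Finset.card hP
  simp only [P, Finset.mem_filter, Finset.mem_univ, true_and] at hAP hmax
  obtain ⟨hZA, hA⟩ := hAP
  have hstep : ∀ u ⊆ Aᶜ, u.Nonempty → u.card ≤ A.card → ∑ i ∈ u, x i = 0 → False := by
    intro u hu hne hc hs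
    have hd : Disjoint A u := disjoint_compl_right.mono_right hu
    have h1 := hmax (A ∪ u) ⟨hZA.trans Finset.subset_union_left,
      good_union t x A u hd hs hc hA⟩
    rw [Finset.card_union_of_disjoint hd] at h1
    have := hne.card_pos
    omega
  have hcompl : A.card + Aᶜ.card = t := by simpa using Finset.card_add_card_compl A
  have hn1 : 1 ≤ n := hn ▸ Fintype.card_pos
  have h1 : Aᶜ.card < n := by
    by_contra hge
    obtain ⟨u, hu, hne, hc, hs⟩ := short_zero_sum t x Aᶜ Z.card (by omega) (fun g =>
      (Finset.card_le_card (Finset.filter_subset_filter _ (Finset.subset_univ _))).trans (h0 g))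
    exact hstep u hu hne (hc.trans (Finset.card_le_card hZA)) hs
  have h2 : Aᶜ.card < D := by
    by_contra hge
    obtain ⟨V, hV, hVD⟩ := Finset.exists_subset_card_eq (not_lt.mp hge)
    let f := V.orderEmbOfFin hVD
    obtain ⟨s, hs, hs0⟩ := hD.1 (fun i => x (f i))
    refine hstep (s.map f.toEmbedding) ?_ (by simpa using hs) ?_ (by simpa using hs0)
    · intro i hi
      obtain ⟨j, _, rfl⟩ := Finset.mem_map.mp hi
      exact hV (Finset.orderEmbOfFin_mem V hVD j)
    · rw [Finset.card_map]
      have := Finset.card_le_univ s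
      simp only [Fintype.card_fin] at this
      omega
  exact ⟨A, by omega, fun k _ hk => hA k hk⟩
end

section
/- Let G be a finite abelian group of order n and let A = (A_1,...,A_t) be a sequence of finite nonempty subsets of G with t ≥ n. If the stabilizer of Σ_n(A) is trivial, Σ_n(A) is nonempty, and each element of G lies in at most n of the sets A_i, then n − 1 ≥ |Σ_n(A)| ≥ 1 − n + Σ_{i=1}^t |A_i| is impossible unless Σ_{i=1}^t |A_i| ≤ 2n − 2; in particular |Σ_n(A)| ≥ 1 − n + Σ_{i=1}^t |A_i|. -/
set_option linter.unusedSectionVars false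
set_option linter.unusedVariables false

namespace DGM
open Finset
open scoped Classical Pointwise

variable {G : Type*} [AddCommGroup G] [Fintype G]

/-- `C` is a union of cosets of `L`. -/
def Per (L : AddSubgroup G) (C : Finset G) : Prop := ∀ x ∈ L, ∀ c ∈ C, x + c ∈ C

/-- The saturation `C + L`. -/
noncomputable def sat (L : AddSubgroup G) (C : Finset G) : Finset G :=
  univ.filter (fun g => ∃ c ∈ C, g - c ∈ L)

/-- The order of a subgroup. -/
noncomputable def oc (L : AddSubgroup G) : ℕ := (univ.filter (fun g : G => g ∈ L)).card

lemma mem_sat {L : AddSubgroup G} {C : Finset G} {g : G} :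
    g ∈ sat L C ↔ ∃ c ∈ C, g - c ∈ L := by simp [sat]

lemma subset_sat (L : AddSubgroup G) (C : Finset G) : C ⊆ sat L C := by
  intro g hg; rw [mem_sat]; exact ⟨g, hg, by simp [L.zero_mem]⟩

lemma per_sat (L : AddSubgroup G) (C : Finset G) : Per L (sat L C) := by
  intro x hx c hc
  rw [mem_sat] at *
  obtain ⟨d, hd, h⟩ := hc
  refine ⟨d, hd, ?_⟩
  have := L.add_mem hx h
  rwa [← add_sub_assoc] at this

lemma sat_eq_of_per {L : AddSubgroup G} {C : Finset G} (h : Per L C) : sat L C = C := by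
  apply Subset.antisymm _ (subset_sat L C)
  intro g hg
  obtain ⟨c, hc, h1⟩ := mem_sat.1 hg
  have := h _ h1 c hc
  simpa using this

lemma per_mono {L L' : AddSubgroup G} {C : Finset G} (hL : L ≤ L') (h : Per L' C) : Per L C :=
  fun x hx c hc => h x (hL hx) c hc

lemma sat_mono {L L' : AddSubgroup G} (hL : L ≤ L') (C : Finset G) : sat L C ⊆ sat L' C := by
  intro g hg
  obtain ⟨c, hc, h1⟩ := mem_sat.1 hg
  exact mem_sat.2 ⟨c, hc, hL h1⟩

lemma sat_subset_of_per {L : AddSubgroup G} {C C' : Finset G} (h : Per L C') (hC : C ⊆ C') :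
    sat L C ⊆ C' := by
  intro g hg
  obtain ⟨c, hc, h1⟩ := mem_sat.1 hg
  have := h _ h1 c (hC hc)
  simpa using this

lemma oc_pos (L : AddSubgroup G) : 0 < oc L :=
  card_pos.2 ⟨0, by simp [L.zero_mem]⟩

lemma oc_mono {L L' : AddSubgroup G} (h : L ≤ L') : oc L ≤ oc L' := by
  apply card_le_card
  intro g; simp only [mem_filter, mem_univ, true_and]; exact fun hg => h hg

lemma oc_lt {L L' : AddSubgroup G} (h : L < L') : oc L < oc L' := by
  apply card_lt_card
  rw [Finset.ssubset_iff_of_subset]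
  · obtain ⟨x, hx, hx'⟩ := SetLike.exists_of_lt h
    exact ⟨x, by simpa using hx, by simpa using hx'⟩
  · intro g; simp only [mem_filter, mem_univ, true_and]; exact fun hg => h.le hg

lemma card_coset (L : AddSubgroup G) (a : G) :
    (univ.filter (fun g : G => g - a ∈ L)).card = oc L := by
  apply card_bij' (fun g _ => g - a) (fun g _ => g + a) <;> simp

lemma per_add {L : AddSubgroup G} {C : Finset G} (h : Per L C) (B : Finset G) :
    Per L (C + B) := by
  intro x hx c hc
  obtain ⟨u, hu, v, hv, rfl⟩ := mem_add.1 hc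
  rw [← add_assoc]
  exact add_mem_add (h x hx u hu) hv

lemma sat_add (L : AddSubgroup G) (A B : Finset G) :
    sat L (A + B) = sat L A + sat L B := by
  ext g
  simp only [mem_sat, mem_add]
  constructor
  · rintro ⟨_, ⟨a, ha, b, hb, rfl⟩, h⟩
    refine ⟨g - b, ⟨a, ha, ?_⟩, b, ⟨b, hb, by simp [L.zero_mem]⟩, by abel⟩
    convert h using 1; abel
  · rintro ⟨u, ⟨a, ha, h1⟩, v, ⟨b, hb, h2⟩, rfl⟩
    refine ⟨a + b, ⟨a, ha, b, hb, rfl⟩, ?_⟩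
    have := L.add_mem h1 h2
    convert this using 1; abel

/-- Stabilizer. -/
def stb (C : Finset G) : AddSubgroup G where
  carrier := {h | ∀ c, h + c ∈ C ↔ c ∈ C}
  zero_mem' := by simp
  add_mem' := by
    intro a b ha hb c
    rw [add_assoc]
    exact (ha _).trans (hb c)
  neg_mem' := by
    intro a ha c
    have := ha (-a + c)
    simpa using this.symm

lemma per_stb (C : Finset G) : Per (stb C) C := fun x hx c hc => (hx c).2 hc

lemma le_stb_of_per {L : AddSubgroup G} {C : Finset G} (h : Per L C) : L ≤ stb C := by
  intro x hx c
  refine ⟨fun hc => ?_, fun hc => h x hx c hc⟩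
  have := h (-x) (L.neg_mem hx) _ hc
  simpa using this

/-- pair counting on a coset of `K₁ + K₂`. -/
lemma grid_count (K₁ K₂ : AddSubgroup G) (c : G) (U V S : Finset G)
    (hV : ∀ x ∈ V, x ∈ K₁) (hU : ∀ y ∈ U, y ∈ K₂)
    (hS : ∀ x ∈ V, ∀ y ∈ U, c + x + y ∈ S) :
    V.card * U.card ≤ S.card * oc (K₁ ⊓ K₂) := by
  rw [← card_product, mul_comm S.card]
  apply card_le_mul_card_image_of_maps_to (f := fun q : G × G => c + q.1 + q.2)
  · rintro ⟨x, y⟩ h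
    obtain ⟨hx, hy⟩ := mem_product.1 h
    exact hS x hx y hy
  · intro b _
    by_cases hne : (filter (fun q : G × G => c + q.1 + q.2 = b) (V ×ˢ U)).Nonempty
    · obtain ⟨⟨x0, y0⟩, h0⟩ := hne
      simp only [mem_filter, mem_product] at h0
      apply card_le_card_of_injOn (fun q : G × G => q.1 - x0)
      · rintro ⟨x, y⟩ h
        simp only [coe_filter, mem_product, Set.mem_ofPred_eq] at h
        simp only [coe_filter, mem_univ, true_and, Set.mem_ofPred_eq]
        refine ⟨K₁.sub_mem (hV x h.1.1) (hV x0 h0.1.1), ?_⟩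
        have e : x - x0 = y0 - y := by
          have := h.2.trans h0.2.symm
          rw [sub_eq_sub_iff_add_eq_add]
          rw [add_assoc, add_assoc] at this
          rw [add_left_cancel this, add_comm]
        rw [e]
        exact K₂.sub_mem (hU y0 h0.1.2) (hU y h.1.2)
      · rintro ⟨x, y⟩ h ⟨x', y'⟩ h' e
        simp only [coe_filter, mem_product, Set.mem_ofPred_eq] at h h' e
        have e1 : x = x' := by simpa using e
        subst e1
        have := h.2.trans h'.2.symm
        simpa using this
    · rw [not_nonempty_iff_eq_empty] at hne
      rw [hne]; simp

lemma union_aux (K₁ K₂ : AddSubgroup G) (C₁ C₂ : Finset G)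
    (h₁ : Per K₁ C₁) (h₂ : Per K₂ C₂) (c : G) (hc : c ∈ C₁ \ C₂)
    (H1 : (C₁ \ C₂).card + oc (K₁ ⊓ K₂) < oc K₂)
    (H2 : (C₂ \ C₁).card + oc (K₁ ⊓ K₂) < oc K₁) :
    oc K₁ ≤ (C₁ \ C₂).card := by
  obtain ⟨hc1, hc2⟩ := mem_sdiff.1 hc
  have p1 : ∀ x ∈ K₁, ∀ z, x + z ∈ C₁ ↔ z ∈ C₁ := fun x hx => le_stb_of_per h₁ hx
  have p2 : ∀ x ∈ K₂, ∀ z, x + z ∈ C₂ ↔ z ∈ C₂ := fun x hx => le_stb_of_per h₂ hx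
  set h := oc (K₁ ⊓ K₂) with hh
  have hpos : 0 < h := oc_pos _
  let K1 := univ.filter (fun g : G => g ∈ K₁)
  let K2 := univ.filter (fun g : G => g ∈ K₂)
  let U := K2.filter (fun y => c + y ∈ C₁)
  let V := K1.filter (fun x => c + x ∈ C₂)
  let U' := K2.filter (fun y => ¬ c + y ∈ C₁)
  let V' := K1.filter (fun x => ¬ c + x ∈ C₂)
  have cU : U.card + U'.card = oc K₂ := card_filter_add_card_filter_not _
  have cV : V.card + V'.card = oc K₁ := card_filter_add_card_filter_not _
  have g1 : V'.card * U.card ≤ (C₁ \ C₂).card * h := by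
    apply grid_count K₁ K₂ c
    · intro x hx; simp [V', K1] at hx; exact hx.1
    · intro x hx; simp [U, K2] at hx; exact hx.1
    · intro x hx y hy
      simp only [V', K1, U, K2, mem_filter, mem_univ, true_and] at hx hy
      rw [mem_sdiff]
      constructor
      · rw [show c + x + y = x + (c + y) by abel, p1 x hx.1]; exact hy.2
      · rw [show c + x + y = y + (c + x) by abel, p2 y hy.1]; exact hx.2
  have g2 : V.card * U'.card ≤ (C₂ \ C₁).card * h := by
    apply grid_count K₁ K₂ c
    · intro x hx; simp [V, K1] at hx; exact hx.1
    · intro x hx; simp [U', K2] at hx; exact hx.1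
    · intro x hx y hy
      simp only [V, K1, U', K2, mem_filter, mem_univ, true_and] at hx hy
      rw [mem_sdiff]
      constructor
      · rw [show c + x + y = y + (c + x) by abel, p2 y hy.1]; exact hx.2
      · rw [show c + x + y = x + (c + y) by abel, p1 x hx.1]; exact hy.2
  have hUh : h ≤ U.card := by
    apply card_le_card
    intro x hx
    simp only [mem_filter, mem_univ, true_and, AddSubgroup.mem_inf, U, K2] at hx ⊢
    exact ⟨hx.2, by rw [add_comm, p1 x hx.1]; exact hc1⟩
  have hVh' : h ≤ V'.card := by
    apply card_le_card
    intro x hx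
    simp only [mem_filter, mem_univ, true_and, AddSubgroup.mem_inf, V', K1] at hx ⊢
    exact ⟨hx.1, by rw [add_comm, p2 x hx.2]; exact hc2⟩
  by_cases hV : V = ∅
  · have : V'.card = oc K₁ := by rw [← cV, hV]; simp
    rw [this] at g1
    by_contra hlt
    push Not at hlt
    nlinarith
  · obtain ⟨x0, hx0⟩ := nonempty_iff_ne_empty.2 hV
    have hVh : h ≤ V.card := by
      apply card_le_card_of_injOn (fun z => z + x0)
      · intro x hx
        simp only [coe_filter, mem_filter, mem_univ, true_and, AddSubgroup.mem_inf, V, K1,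
          Set.mem_ofPred_eq] at hx hx0 ⊢
        refine ⟨K₁.add_mem hx.1 hx0.1, ?_⟩
        rw [show c + (x + x0) = x + (c + x0) by abel, p2 x hx.2]; exact hx0.2
      · intro a _ b _ e; simpa using e
    exfalso
    have G1 : (V'.card : ℤ) * U.card < (U.card + U'.card - h) * h := by
      have : ((C₁ \ C₂).card : ℤ) < U.card + U'.card - h := by omega
      have g1' : (V'.card : ℤ) * U.card ≤ (C₁ \ C₂).card * h := by exact_mod_cast g1
      nlinarith
    have G2 : (V.card : ℤ) * U'.card < (V.card + V'.card - h) * h := by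
      have : ((C₂ \ C₁).card : ℤ) < V.card + V'.card - h := by omega
      have g2' : (V.card : ℤ) * U'.card ≤ (C₂ \ C₁).card * h := by exact_mod_cast g2
      nlinarith
    have a1 : (h : ℤ) ≤ V.card := by exact_mod_cast hVh
    have a2 : (h : ℤ) ≤ V'.card := by exact_mod_cast hVh'
    have a3 : (h : ℤ) ≤ U.card := by exact_mod_cast hUh
    have a4 : (0 : ℤ) < h := by exact_mod_cast hpos
    clear_value U V U' V' h
    clear g1 g2 H1 H2 cU cV hUh hVh hVh' hpos hh
    generalize (V.card : ℤ) = v at *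
    generalize (V'.card : ℤ) = v' at *
    generalize (U.card : ℤ) = u at *
    generalize (U'.card : ℤ) = u' at *
    generalize (h : ℤ) = k at *
    have b1 : v' < u' := by nlinarith [mul_nonneg (sub_nonneg.2 a2) (sub_nonneg.2 a3)]
    nlinarith [mul_nonneg (sub_nonneg.2 a2) (sub_nonneg.2 a1)]

lemma union_lemma (K₁ K₂ : AddSubgroup G) (C₁ C₂ : Finset G)
    (h₁ : Per K₁ C₁) (h₂ : Per K₂ C₂) :
    C₁.card + oc K₁ ≤ (C₁ ∪ C₂).card + oc (K₁ ⊓ K₂) ∨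
    C₂.card + oc K₂ ≤ (C₁ ∪ C₂).card + oc (K₁ ⊓ K₂) ∨ C₁ ⊆ C₂ ∨ C₂ ⊆ C₁ := by
  by_contra hcon
  push Not at hcon
  obtain ⟨e1, e2, n1, n2⟩ := hcon
  have c1 : (C₂ \ C₁).card + C₁.card = (C₁ ∪ C₂).card := by
    rw [card_sdiff_add_card, union_comm]
  have c2 : (C₁ \ C₂).card + C₂.card = (C₁ ∪ C₂).card := by
    rw [card_sdiff_add_card]
  obtain ⟨c, hc, hc'⟩ := not_subset.1 n1
  obtain ⟨d, hd, hd'⟩ := not_subset.1 n2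
  have A1 := union_aux K₁ K₂ C₁ C₂ h₁ h₂ c (mem_sdiff.2 ⟨hc, hc'⟩) (by omega) (by omega)
  have e : oc (K₂ ⊓ K₁) = oc (K₁ ⊓ K₂) := by rw [inf_comm]
  have A2 := union_aux K₂ K₁ C₂ C₁ h₂ h₁ d (mem_sdiff.2 ⟨hd, hd'⟩) (by omega) (by omega)
  omega

/-- Iterable form. -/
lemma union_good (m : ℕ) (K₁ K₂ : AddSubgroup G) (C₁ C₂ : Finset G)
    (h₁ : Per K₁ C₁) (h₂ : Per K₂ C₂) (g₁ : m ≤ C₁.card + oc K₁) (g₂ : m ≤ C₂.card + oc K₂) :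
    ∃ K, Per K (C₁ ∪ C₂) ∧ m ≤ (C₁ ∪ C₂).card + oc K := by
  have hp : Per (K₁ ⊓ K₂) (C₁ ∪ C₂) := by
    intro x hx c hc
    rcases mem_union.1 hc with h | h
    · exact mem_union_left _ (h₁ x hx.1 c h)
    · exact mem_union_right _ (h₂ x hx.2 c h)
  rcases union_lemma K₁ K₂ C₁ C₂ h₁ h₂ with h | h | h | h
  · exact ⟨_, hp, by omega⟩
  · exact ⟨_, hp, by omega⟩
  · rw [union_eq_right.2 h]; exact ⟨K₂, h₂, g₂⟩
  · rw [union_eq_left.2 h]; exact ⟨K₁, h₁, g₁⟩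

lemma etransform (k : ℕ) : ∀ A B : Finset G, B.card ≤ k → (0 : G) ∈ B →
    ∃ (C : Finset G) (L : AddSubgroup G), A ⊆ C ∧ C ⊆ A + B ∧ Per L C ∧
      A.card + B.card ≤ C.card + oc L := by
  induction k with
  | zero => intro A B h h0; rw [Nat.le_zero, card_eq_zero] at h; simp [h] at h0
  | succ k ih =>
    intro A B hB h0
    by_cases hall : ∀ e ∈ A, ∀ b ∈ B, e + b ∈ A
    · refine ⟨A, stb A, Subset.refl _, ?_, per_stb A, ?_⟩
      · intro a ha; simpa using add_mem_add ha h0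
      · have : B ⊆ univ.filter (fun g => g ∈ stb A) := by
          intro b hb
          simp only [mem_filter, mem_univ, true_and]
          have hsub : A.image (fun a => b + a) ⊆ A := by
            intro z hz
            obtain ⟨a, ha, rfl⟩ := mem_image.1 hz
            rw [add_comm]; exact hall a ha b hb
          have heq : A.image (fun a => b + a) = A := by
            apply eq_of_subset_of_card_le hsub
            rw [card_image_of_injective _ (add_right_injective b)]
          intro c
          constructor
          · intro hc
            rw [← heq] at hc
            obtain ⟨a, ha, e⟩ := mem_image.1 hc
            have : a = c := by simpa using e
            rwa [← this]
          · intro hc; rw [add_comm]; exact hall c hc b hb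
        have := card_le_card this
        unfold oc; omega
    · push Not at hall
      obtain ⟨e, he, b, hb, hn⟩ := hall
      let B' := B.filter (fun b => e + b ∈ A)
      let Bn := B.filter (fun b => ¬ e + b ∈ A)
      let A' := A ∪ Bn.image (fun b => e + b)
      have cB : B'.card + Bn.card = B.card := card_filter_add_card_filter_not _
      have hBn : 0 < Bn.card := card_pos.2 ⟨b, by simp [Bn, hb, hn]⟩
      have cA : A'.card = A.card + Bn.card := by
        rw [card_union_of_disjoint, card_image_of_injective _ (add_right_injective e)]
        rw [disjoint_left]
        intro a ha ha'
        obtain ⟨b, hb, rfl⟩ := mem_image.1 ha'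
        simp [Bn] at hb; exact hb.2 ha
      obtain ⟨C, L, h1, h2, h3, h4⟩ := ih A' B' (by omega) (by simp [B', h0, he])
      refine ⟨C, L, subset_union_left.trans h1, h2.trans ?_, h3, by omega⟩
      intro z hz
      obtain ⟨a, ha, b, hb, rfl⟩ := mem_add.1 hz
      simp only [B', mem_filter] at hb
      rcases mem_union.1 ha with h | h
      · exact add_mem_add h hb.1
      · obtain ⟨b', hb', rfl⟩ := mem_image.1 h
        simp only [Bn, mem_filter] at hb'
        rw [show e + b' + b = (e + b) + b' by abel]
        exact add_mem_add hb.2 hb'.1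

lemma kneser_weak (A B : Finset G) (hA : A.Nonempty) (hB : B.Nonempty) :
    ∃ L : AddSubgroup G, Per L (A + B) ∧ A.card + B.card ≤ (A + B).card + oc L := by
  have key : ∀ b ∈ B, ∃ (C : Finset G) (L : AddSubgroup G),
      A.image (fun a => a + b) ⊆ C ∧ C ⊆ A + B ∧ Per L C ∧ A.card + B.card ≤ C.card + oc L := by
    intro b hb
    obtain ⟨C, L, h1, h2, h3, h4⟩ := etransform _ A (B.image (fun x => x - b)) le_rfl
      (mem_image.2 ⟨b, hb, by simp⟩)
    rw [card_image_of_injective _ (sub_left_injective)] at h4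
    refine ⟨C.image (fun x => x + b), L, image_subset_image h1, ?_, ?_, ?_⟩
    · intro z hz
      obtain ⟨x, hx, rfl⟩ := mem_image.1 hz
      obtain ⟨a, ha, y, hy, rfl⟩ := mem_add.1 (h2 hx)
      obtain ⟨b', hb', rfl⟩ := mem_image.1 hy
      rw [show a + (b' - b) + b = a + b' by abel]
      exact add_mem_add ha hb'
    · intro x hx c hc
      obtain ⟨z, hz, rfl⟩ := mem_image.1 hc
      exact mem_image.2 ⟨x + z, h3 x hx z hz, by abel⟩
    · rwa [card_image_of_injective _ (add_left_injective b)]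
  have key2 : ∀ S : Finset G, S.Nonempty → S ⊆ B → ∃ (C : Finset G) (L : AddSubgroup G),
      A + S ⊆ C ∧ C ⊆ A + B ∧ Per L C ∧ A.card + B.card ≤ C.card + oc L := by
    intro S hS
    induction hS using Finset.Nonempty.cons_induction with
    | singleton b =>
      intro hb
      obtain ⟨C, L, h1, h2⟩ := key b (hb (mem_singleton_self b))
      refine ⟨C, L, ?_, h2⟩
      rw [add_singleton]; exact h1
    | cons b S hbS hS ih =>
      intro hb
      rw [cons_eq_insert] at hb ⊢
      obtain ⟨C, L, h1, h2, h3, h4⟩ := key b (hb (mem_insert_self b S))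
      obtain ⟨C', L', h1', h2', h3', h4'⟩ := ih ((subset_insert b S).trans hb)
      obtain ⟨K, hK, hm⟩ := union_good _ L L' C C' h3 h3' h4 h4'
      refine ⟨C ∪ C', K, ?_, union_subset h2 h2', hK, hm⟩
      intro z hz
      obtain ⟨a, ha, s, hs, rfl⟩ := mem_add.1 hz
      rcases mem_insert.1 hs with rfl | hs
      · exact mem_union_left _ (h1 (mem_image.2 ⟨a, ha, rfl⟩))
      · exact mem_union_right _ (h1' (add_mem_add ha hs))
  obtain ⟨C, L, h1, h2, h3, h4⟩ := key2 B hB (Subset.refl B)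
  obtain rfl := Subset.antisymm h1 h2
  exact ⟨L, h3, h4⟩

lemma sat_nonempty {L : AddSubgroup G} {C : Finset G} (h : C.Nonempty) : (sat L C).Nonempty :=
  h.mono (subset_sat L C)

/-- The theorem of Kneser. -/
lemma kneser (A B : Finset G) (hA : A.Nonempty) (hB : B.Nonempty) (N : AddSubgroup G)
    (hN : ∀ L, Per L (sat N (A + B)) → L ≤ N) :
    (sat N A).card + (sat N B).card ≤ (sat N (A + B)).card + oc N := by
  rw [sat_add] at hN ⊢
  obtain ⟨L, h1, h2⟩ := kneser_weak (sat N A) (sat N B) (sat_nonempty hA) (sat_nonempty hB)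
  have := oc_mono (hN L h1)
  omega

lemma sat_zero (N : AddSubgroup G) : (sat N (0 : Finset G)).card = oc N := by
  unfold sat oc; congr 1; ext g; simp

lemma kneser_multi {ρ : Type*} (W : ρ → Finset G) (R : Finset ρ) (hW : ∀ r ∈ R, (W r).Nonempty)
    (N : AddSubgroup G) (hN : ∀ L, Per L (sat N (∑ r ∈ R, W r)) → L ≤ N) :
    (∑ r ∈ R, ((sat N (W r)).card : ℤ)) ≤
      (sat N (∑ r ∈ R, W r)).card + ((R.card : ℤ) - 1) * oc N := by
  induction R using Finset.induction_on with
  | empty => simp [sat_zero]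
  | insert a R ha ih =>
    have hne : (∑ r ∈ R, W r).Nonempty := by
      clear ih hN ha
      induction R using Finset.induction_on with
      | empty => simp
      | insert b R hb ih' =>
        rw [sum_insert hb]
        exact (hW b (by simp)).add (ih' (fun r hr => hW r (by
          rcases mem_insert.1 hr with h | h <;> simp [h])))
    rw [sum_insert ha] at hN ⊢
    rw [sum_insert ha, card_insert_of_notMem ha]
    have h1 := kneser (W a) (∑ r ∈ R, W r) (hW a (by simp)) hne N hN
    have h2 := ih (fun r hr => hW r (by simp [hr])) (by
      intro L hL
      apply hN
      rw [sat_add, add_comm]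
      exact per_add hL _)
    push_cast
    have h1' : ((sat N (W a)).card : ℤ) + (sat N (∑ r ∈ R, W r)).card ≤
      (sat N (W a + ∑ r ∈ R, W r)).card + oc N := by exact_mod_cast h1
    linarith

variable {ι ρ : Type*} [Fintype ι]

/-- A representation following the pattern `p` modulo `H`. -/
def Rep (A : ι → Finset G) (R : Finset ρ) (p : ρ → G) (H : AddSubgroup G)
    (σ : ρ → ι) (y : ρ → G) : Prop :=
  Set.InjOn σ R ∧ ∀ r ∈ R, y r ∈ A (σ r) ∧ y r - p r ∈ H

/-- All sums following the pattern `p` modulo `H`. -/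
noncomputable def DD (A : ι → Finset G) (R : Finset ρ) (p : ρ → G) (H : AddSubgroup G) :
    Finset G :=
  univ.filter (fun g => ∃ σ y, Rep A R p H σ y ∧ ∑ r ∈ R, y r = g)

lemma mem_DD {A : ι → Finset G} {R : Finset ρ} {p : ρ → G} {H : AddSubgroup G} {g : G} :
    g ∈ DD A R p H ↔ ∃ σ y, Rep A R p H σ y ∧ ∑ r ∈ R, y r = g := by simp [DD]

/-- The number of sets meeting the coset `g + L`. -/
noncomputable def cnt (A : ι → Finset G) (L : AddSubgroup G) (g : G) : ℕ :=
  (univ.filter (fun i => ∃ a ∈ A i, a - g ∈ L)).card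

/-- Truncated multiplicity. -/
noncomputable def mu (l : ℕ) (A : ι → Finset G) (L : AddSubgroup G) (g : G) : ℤ :=
  min (l : ℤ) (cnt A L g)

/-- Union of the cosets in the pattern. -/
noncomputable def supp (R : Finset ρ) (p : ρ → G) (H : AddSubgroup G) : Finset G :=
  univ.filter (fun g => ∃ r ∈ R, g - p r ∈ H)

/-- The main inequality. -/
def Goal (H : AddSubgroup G) (A : ι → Finset G) (R : Finset ρ) (p : ρ → G) : Prop :=
  (DD A R p H).Nonempty → ∀ N ≤ H, (∀ L, Per L (sat N (DD A R p H)) → L ≤ N) →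
    (R.card : ℤ) * oc H ≤ (sat N (DD A R p H)).card + ((R.card : ℤ) - 1) * oc N
      + ∑ g ∈ supp R p H, (mu R.card A H g - mu R.card A N g)

lemma cnt_mono (A : ι → Finset G) {L L' : AddSubgroup G} (h : L ≤ L') (g : G) :
    cnt A L g ≤ cnt A L' g := by
  apply card_le_card
  intro i
  simp only [mem_filter, mem_univ, true_and]
  rintro ⟨a, ha, h1⟩
  exact ⟨a, ha, h h1⟩

lemma mu_mono (l : ℕ) (A : ι → Finset G) {L L' : AddSubgroup G} (h : L ≤ L') (g : G) :
    mu l A L g ≤ mu l A L' g := by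
  have := cnt_mono A h g
  unfold mu; omega

lemma cnt_sat (A : ι → Finset G) {N L : AddSubgroup G} (h : N ≤ L) (g : G) :
    cnt (fun i => sat N (A i)) L g = cnt A L g := by
  unfold cnt
  congr 1
  ext i
  simp only [mem_filter, mem_univ, true_and]
  constructor
  · rintro ⟨a, ha, h1⟩
    obtain ⟨b, hb, h2⟩ := mem_sat.1 ha
    refine ⟨b, hb, ?_⟩
    have := L.sub_mem h1 (h h2)
    convert this using 1; abel
  · rintro ⟨a, ha, h1⟩
    exact ⟨a, subset_sat _ _ ha, h1⟩

lemma sum_mem_diff {R : Finset ρ} {y p : ρ → G} {H : AddSubgroup G}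
    (h : ∀ r ∈ R, y r - p r ∈ H) : ∑ r ∈ R, y r - ∑ r ∈ R, p r ∈ H := by
  rw [← sum_sub_distrib]
  exact H.sum_mem h

lemma DD_coset {A : ι → Finset G} {R : Finset ρ} {p : ρ → G} {H : AddSubgroup G} {d : G}
    (hd : d ∈ DD A R p H) : d - ∑ r ∈ R, p r ∈ H := by
  obtain ⟨σ, y, h, rfl⟩ := mem_DD.1 hd
  exact sum_mem_diff (fun r hr => (h.2 r hr).2)

lemma DD_sat (A : ι → Finset G) {R : Finset ρ} (hR : R.Nonempty) (p : ρ → G)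
    {H N : AddSubgroup G} (hN : N ≤ H) :
    DD (fun i => sat N (A i)) R p H = sat N (DD A R p H) := by
  ext g
  rw [mem_DD, mem_sat]
  constructor
  · rintro ⟨σ, y, h, rfl⟩
    have : ∀ r, ∃ z, r ∈ R → z ∈ A (σ r) ∧ y r - z ∈ N := by
      intro r
      by_cases hr : r ∈ R
      · obtain ⟨z, hz, h1⟩ := mem_sat.1 (h.2 r hr).1
        exact ⟨z, fun _ => ⟨hz, h1⟩⟩
      · exact ⟨0, fun h => absurd h hr⟩
    choose z hz using this
    refine ⟨∑ r ∈ R, z r, mem_DD.2 ⟨σ, z, ⟨h.1, fun r hr => ⟨(hz r hr).1, ?_⟩⟩, rfl⟩,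
      sum_mem_diff (fun r hr => (hz r hr).2)⟩
    have := H.sub_mem (h.2 r hr).2 (hN (hz r hr).2)
    convert this using 1; abel
  · rintro ⟨c, hc, h1⟩
    obtain ⟨σ, y, h, rfl⟩ := mem_DD.1 hc
    obtain ⟨r0, hr0⟩ := hR
    refine ⟨σ, fun r => y r + if r = r0 then g - ∑ r ∈ R, y r else 0, ⟨h.1, ?_⟩, ?_⟩
    · intro r hr
      by_cases e : r = r0
      · subst e
        simp only [if_true]
        refine ⟨mem_sat.2 ⟨y r, (h.2 r hr).1, by simpa using h1⟩, ?_⟩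
        have := H.add_mem (h.2 r hr).2 (hN h1)
        convert this using 1; abel
      · simp only [e, if_false, add_zero]
        exact ⟨subset_sat _ _ (h.2 r hr).1, (h.2 r hr).2⟩
    · rw [sum_add_distrib, sum_ite_eq' R r0]
      simp [hr0]

lemma Rep.trans {A : ι → Finset G} {R : Finset ρ} {p y z : ρ → G} {H L : AddSubgroup G}
    (hL : L ≤ H) (hy : ∀ r ∈ R, y r - p r ∈ H) {τ : ρ → ι} (h' : Rep A R y L τ z) :
    Rep A R p H τ z := by
  refine ⟨h'.1, fun r hr => ⟨(h'.2 r hr).1, ?_⟩⟩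
  have := H.add_mem (hL (h'.2 r hr).2) (hy r hr)
  convert this using 1; abel

lemma DD_sub {A : ι → Finset G} {R : Finset ρ} {p y : ρ → G} {H L : AddSubgroup G}
    (hL : L ≤ H) (hy : ∀ r ∈ R, y r - p r ∈ H) : DD A R y L ⊆ DD A R p H := by
  intro g hg
  obtain ⟨τ, z, h', rfl⟩ := mem_DD.1 hg
  exact mem_DD.2 ⟨τ, z, h'.trans hL hy, rfl⟩

lemma supp_sub {R R' : Finset ρ} {p y : ρ → G} {H L : AddSubgroup G} (hR : R' ⊆ R)
    (hL : L ≤ H) (hy : ∀ r ∈ R, y r - p r ∈ H) : supp R' y L ⊆ supp R p H := by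
  intro g hg
  simp only [supp, mem_filter, mem_univ, true_and] at *
  obtain ⟨r, hr, h⟩ := hg
  refine ⟨r, hR hr, ?_⟩
  have := H.add_mem (hL h) (hy r (hR hr))
  convert this using 1; abel

lemma stb_lt {D D' : Finset G} {L : AddSubgroup G} {c x : G} (hne : D'.Nonempty) (hD : D' ⊆ D)
    (hc : ∀ d ∈ D', d - c ∈ L) (hx : x ∈ L) (hxc : x + c ∉ D) : stb D' < L := by
  obtain ⟨d, hd⟩ := hne
  refine lt_of_le_of_ne ?_ ?_
  · intro h hh
    have := L.sub_mem (hc _ ((hh d).2 hd)) (hc d hd)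
    convert this using 1; abel
  · intro e
    apply hxc
    apply hD
    have h1 : x - (d - c) ∈ stb D' := by rw [e]; exact L.sub_mem hx (hc d hd)
    have := (h1 d).2 hd
    convert this using 1; abel

/-- Abstract descent. -/
lemma descent (D : Finset G) (H N : AddSubgroup G) (hN : ∀ L, Per L D → L ≤ N)
    (Φ : AddSubgroup G → ℤ) (X : ℤ)
    (step : ∀ L ≤ H, (∃ C ⊆ D, Per L C ∧ X ≤ C.card + Φ L) → ∀ c ∈ D, ∀ x ∈ L, x + c ∉ D →
      ∃ N' < L, ∃ D' ⊆ D, Per N' D' ∧ (∀ d ∈ D', d - c ∈ L) ∧ Φ L ≤ D'.card + Φ N') :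
    ∀ k : ℕ, ∀ L ≤ H, oc L ≤ k → (∃ C ⊆ D, Per L C ∧ X ≤ C.card + Φ L) →
      ∃ L ≤ N, ∃ C ⊆ D, X ≤ C.card + Φ L := by
  intro k
  induction k with
  | zero => intro L _ h; have := oc_pos L; omega
  | succ k ih =>
    intro L hL hk hC
    by_cases hLN : L ≤ N
    · obtain ⟨C, h1, h2, h3⟩ := hC
      exact ⟨L, hLN, C, h1, h3⟩
    · have hnp : ¬ Per L D := fun h => hLN (hN L h)
      unfold Per at hnp
      push Not at hnp
      obtain ⟨x, hx, c, hc, hxc⟩ := hnp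
      obtain ⟨N', hN', D', hD', hp, hco, hineq⟩ := step L hL hC c hc x hx hxc
      obtain ⟨C, h1, h2, h3⟩ := hC
      have hlt := oc_lt hN'
      refine ih N' (hN'.le.trans hL) (by omega) ⟨C ∪ D', union_subset h1 hD', ?_, ?_⟩
      · intro z hz d hd
        rcases mem_union.1 hd with h | h
        · exact mem_union_left _ (h2 z (hN'.le hz) d h)
        · exact mem_union_right _ (hp z hz d h)
      · rw [card_union_of_disjoint]
        · push_cast; linarith
        · rw [disjoint_left]
          intro d hd hd'
          apply hxc
          apply h1
          have := h2 (x - (d - c)) (L.sub_mem hx (hco d hd')) d hd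
          convert this using 1; abel

/-- The step when the missed coset is hit by a pattern of the family `B` itself. -/
lemma direct_step {H L : AddSubgroup G} (B : ι → Finset G) (R : Finset ρ) (p : ρ → G)
    (D : Finset G) (hBD : DD B R p H ⊆ D) (hL : L ≤ H)
    {σ : ρ → ι} {y : ρ → G} (hrep : Rep B R p H σ y) (IH : Goal L B R y)
    {c x : G} (hyc : ∑ r ∈ R, y r - c ∈ L) (hx : x ∈ L) (hxc : x + c ∉ D) :
    ∃ N' < L, ∃ D' ⊆ D, Per N' D' ∧ (∀ d ∈ D', d - c ∈ L) ∧
      ((R.card : ℤ) - 1) * oc L - ∑ g ∈ supp R p H, mu R.card B L g ≤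
      D'.card + (((R.card : ℤ) - 1) * oc N' - ∑ g ∈ supp R p H, mu R.card B N' g) := by
  have hne : (DD B R y L).Nonempty :=
    ⟨_, mem_DD.2 ⟨σ, y, ⟨hrep.1, fun r hr => ⟨(hrep.2 r hr).1, by simp [L.zero_mem]⟩⟩, rfl⟩⟩
  have hy : ∀ r ∈ R, y r - p r ∈ H := fun r hr => (hrep.2 r hr).2
  have hsub : DD B R y L ⊆ D := (DD_sub hL hy).trans hBD
  have hco : ∀ d ∈ DD B R y L, d - c ∈ L := by
    intro d hd
    have := L.add_mem (DD_coset hd) hyc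
    convert this using 1; abel
  have hlt := stb_lt hne hsub hco hx hxc
  refine ⟨stb (DD B R y L), hlt, DD B R y L, hsub, per_stb _, hco, ?_⟩
  have key := IH hne _ hlt.le (by
    rw [sat_eq_of_per (per_stb _)]; exact fun M hM => le_stb_of_per hM)
  rw [sat_eq_of_per (per_stb _)] at key
  have h1 : ∑ g ∈ supp R y L, (mu R.card B L g - mu R.card B (stb (DD B R y L)) g) ≤
      ∑ g ∈ supp R p H, (mu R.card B L g - mu R.card B (stb (DD B R y L)) g) :=
    sum_le_sum_of_subset_of_nonneg (supp_sub (Subset.refl R) hL hy)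
      (fun g _ _ => sub_nonneg.2 (mu_mono _ _ hlt.le g))
  rw [sum_sub_distrib (s := supp R p H)] at h1
  have := oc_pos L
  have : (0 : ℤ) < oc L := by exact_mod_cast this
  linarith

/-- Uncrossing of the sets with indices `i` and `j`. -/
noncomputable def unc (A : ι → Finset G) (i j : ι) : ι → Finset G :=
  fun k => if k = i then A i ∪ A j else if k = j then A i ∩ A j else A k

lemma unc_i (A : ι → Finset G) (i j : ι) : unc A i j i = A i ∪ A j := by simp [unc]
lemma unc_j (A : ι → Finset G) {i j : ι} (h : i ≠ j) : unc A i j j = A i ∩ A j := by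
  simp [unc, h.symm]
lemma unc_o (A : ι → Finset G) {i j k : ι} (h : k ≠ i) (h' : k ≠ j) : unc A i j k = A k := by
  simp [unc, h, h']

lemma rep_swap {R : Finset ρ} {σ : ρ → ι} (i j : ι) (h : Set.InjOn σ R) :
    Set.InjOn (fun r => Equiv.swap i j (σ r)) R := by
  intro a ha b hb e
  exact h ha hb ((Equiv.swap i j).injective e)

lemma DD_unc (A : ι → Finset G) {i j : ι} (hij : i ≠ j) (R : Finset ρ) (p : ρ → G)
    (H : AddSubgroup G) : DD (unc A i j) R p H ⊆ DD A R p H := by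
  intro g hg
  obtain ⟨σ, y, h, rfl⟩ := mem_DD.1 hg
  rw [mem_DD]
  by_cases hc : ∀ r ∈ R, σ r = i → y r ∈ A i
  · refine ⟨σ, y, ⟨h.1, fun r hr => ⟨?_, (h.2 r hr).2⟩⟩, rfl⟩
    have h1 := (h.2 r hr).1
    by_cases e1 : σ r = i
    · rw [e1]; exact hc r hr e1
    by_cases e2 : σ r = j
    · rw [e2, unc_j A hij] at h1; rw [e2]; exact (mem_inter.1 h1).2
    · rwa [unc_o A e1 e2] at h1
  · push Not at hc
    obtain ⟨r1, hr1, e, hn⟩ := hc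
    refine ⟨fun r => Equiv.swap i j (σ r), y, ⟨rep_swap i j h.1, fun r hr => ⟨?_, (h.2 r hr).2⟩⟩, rfl⟩
    have h1 := (h.2 r hr).1
    by_cases e1 : σ r = i
    · have : r = r1 := h.1 hr hr1 (e1.trans e.symm)
      subst this
      rw [e1, unc_i] at h1
      simp only [e1, Equiv.swap_apply_left]
      exact (mem_union.1 h1).resolve_left hn
    by_cases e2 : σ r = j
    · rw [e2, unc_j A hij] at h1
      simp only [e2, Equiv.swap_apply_right]; exact (mem_inter.1 h1).1
    · rw [unc_o A e1 e2] at h1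
      simp only [Equiv.swap_apply_of_ne_of_ne e1 e2]; exact h1

lemma cnt_split (B : ι → Finset G) {i j : ι} (hij : i ≠ j) (L : AddSubgroup G) (g : G) :
    cnt B L g = (univ.filter (fun k => (k ≠ i ∧ k ≠ j) ∧ ∃ a ∈ B k, a - g ∈ L)).card +
      (if ∃ a ∈ B i, a - g ∈ L then 1 else 0) + (if ∃ a ∈ B j, a - g ∈ L then 1 else 0) := by
  unfold cnt
  rw [card_filter, card_filter]
  have : ∀ k, (if ∃ a ∈ B k, a - g ∈ L then 1 else 0) =
      (if (k ≠ i ∧ k ≠ j) ∧ ∃ a ∈ B k, a - g ∈ L then 1 else 0) +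
      (if k = i then (if ∃ a ∈ B i, a - g ∈ L then 1 else 0) else 0) +
      (if k = j then (if ∃ a ∈ B j, a - g ∈ L then 1 else 0) else 0) := by
    intro k
    by_cases e1 : k = i
    · subst e1; simp [hij]
    by_cases e2 : k = j
    · subst e2; simp [e1]
    · simp [e1, e2]
  rw [sum_congr rfl (fun k _ => this k), sum_add_distrib, sum_add_distrib]
  simp

lemma rest_congr (B A : ι → Finset G) {i j : ι} (h : ∀ k, k ≠ i → k ≠ j → B k = A k)
    (L : AddSubgroup G) (g : G) :
    (univ.filter (fun k => (k ≠ i ∧ k ≠ j) ∧ ∃ a ∈ B k, a - g ∈ L)) =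
    (univ.filter (fun k => (k ≠ i ∧ k ≠ j) ∧ ∃ a ∈ A k, a - g ∈ L)) := by
  ext k
  simp only [mem_filter, mem_univ, true_and]
  constructor
  · rintro ⟨⟨h1, h2⟩, h3⟩; rw [h k h1 h2] at h3; exact ⟨⟨h1, h2⟩, h3⟩
  · rintro ⟨⟨h1, h2⟩, h3⟩; rw [← h k h1 h2] at h3; exact ⟨⟨h1, h2⟩, h3⟩

/-- Uncrossing does not increase coset multiplicities. -/
lemma cnt_unc_le (A : ι → Finset G) {i j : ι} (hij : i ≠ j) (L : AddSubgroup G) (g : G) :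
    cnt (unc A i j) L g ≤ cnt A L g := by
  rw [cnt_split _ hij, cnt_split A hij, rest_congr (unc A i j) A (fun k h h' => unc_o A h h'),
    unc_i, unc_j A hij]
  have h1 : (∃ a ∈ A i ∪ A j, a - g ∈ L) ↔ (∃ a ∈ A i, a - g ∈ L) ∨ ∃ a ∈ A j, a - g ∈ L := by
    simp only [mem_union]; constructor
    · rintro ⟨a, h | h, h'⟩; exacts [Or.inl ⟨a, h, h'⟩, Or.inr ⟨a, h, h'⟩]
    · rintro (⟨a, h, h'⟩ | ⟨a, h, h'⟩); exacts [⟨a, Or.inl h, h'⟩, ⟨a, Or.inr h, h'⟩]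
  have h2 : (∃ a ∈ A i ∩ A j, a - g ∈ L) → (∃ a ∈ A i, a - g ∈ L) ∧ ∃ a ∈ A j, a - g ∈ L := by
    rintro ⟨a, h, h'⟩
    exact ⟨⟨a, (mem_inter.1 h).1, h'⟩, ⟨a, (mem_inter.1 h).2, h'⟩⟩
  have key : ∀ (n : ℕ) (P1 P2 P3 P4 : Prop) [Decidable P1] [Decidable P2] [Decidable P3]
      [Decidable P4], (P1 ↔ P3 ∨ P4) → (P2 → P3 ∧ P4) →
      n + (if P1 then 1 else 0) + (if P2 then 1 else 0) ≤
      n + (if P3 then 1 else 0) + (if P4 then 1 else 0) := by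
    intro n P1 P2 P3 P4 _ _ _ _ h h'
    split_ifs <;> first | omega | tauto
  exact key _ _ _ _ _ h1 h2

lemma cnt_per {B : ι → Finset G} {N L : AddSubgroup G} (hL : L ≤ N) (h : ∀ k, Per N (B k)) (g : G) :
    cnt B L g = (univ.filter (fun k => g ∈ B k)).card := by
  unfold cnt
  congr 1
  ext k
  simp only [mem_filter, mem_univ, true_and]
  constructor
  · rintro ⟨a, ha, h1⟩
    have := h k _ (N.neg_mem (hL h1)) a ha
    convert this using 1; abel
  · intro hg; exact ⟨g, hg, by simp [L.zero_mem]⟩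

lemma per_unc {A : ι → Finset G} {i j : ι} {N : AddSubgroup G} (h : ∀ k, Per N (A k)) (k : ι) :
    Per N (unc A i j k) := by
  unfold unc
  split_ifs
  · intro x hx c hc
    rcases mem_union.1 hc with h' | h'
    · exact mem_union_left _ (h i x hx c h')
    · exact mem_union_right _ (h j x hx c h')
  · intro x hx c hc
    exact mem_inter.2 ⟨h i x hx c (mem_inter.1 hc).1, h j x hx c (mem_inter.1 hc).2⟩
  · exact h k

/-- Uncrossing preserves multiplicities of elements. -/
lemma cnt_unc_per {A : ι → Finset G} {i j : ι} (hij : i ≠ j) {N L : AddSubgroup G} (hL : L ≤ N)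
    (h : ∀ k, Per N (A k)) (g : G) : cnt (unc A i j) L g = cnt A N g := by
  have e1 : cnt (unc A i j) L g = cnt (unc A i j) ⊥ g := by
    rw [cnt_per hL (per_unc h), cnt_per bot_le (per_unc h)]
  have e2 : cnt A N g = cnt A ⊥ g := by
    rw [cnt_per le_rfl h, cnt_per bot_le h]
  rw [e1, e2, cnt_split _ hij, cnt_split A hij,
    rest_congr (unc A i j) A (fun k h h' => unc_o A h h'), unc_i, unc_j A hij]
  simp only [AddSubgroup.mem_bot, sub_eq_zero, exists_eq_right, mem_union, mem_inter]
  split_ifs <;> first | omega | tauto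

/-- Sum of squares grows. -/
lemma unc_measure (A : ι → Finset G) {i j : ι} (hij : i ≠ j) (h1 : ¬ A i ⊆ A j)
    (h2 : ¬ A j ⊆ A i) :
    ∑ k, (A k).card ^ 2 < ∑ k, (unc A i j k).card ^ 2 := by
  have hs : ∀ B : ι → Finset G, ∑ k, (B k).card ^ 2 = (B i).card ^ 2 + ((B j).card ^ 2 +
      ∑ k ∈ (univ.erase i).erase j, (B k).card ^ 2) := by
    intro B
    rw [add_sum_erase _ (fun k => (B k).card ^ 2) (by simp [hij.symm]),
      add_sum_erase _ (fun k => (B k).card ^ 2) (by simp)]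
  rw [hs A, hs (unc A i j), unc_i, unc_j A hij]
  have e : ∑ k ∈ (univ.erase i).erase j, (unc A i j k).card ^ 2 =
      ∑ k ∈ (univ.erase i).erase j, (A k).card ^ 2 := by
    apply sum_congr rfl
    intro k hk
    simp only [mem_erase, mem_univ, and_true] at hk
    rw [unc_o A hk.2 hk.1]
  rw [e]
  have c1 := card_union_add_card_inter (A i) (A j)
  have c2 : (A i ∩ A j).card < (A i).card := by
    apply card_lt_card
    refine ⟨inter_subset_left, fun h => h1 (fun a ha => (mem_inter.1 (h ha)).2)⟩
  have c3 : (A i ∩ A j).card < (A j).card := by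
    apply card_lt_card
    refine ⟨inter_subset_right, fun h => h2 (fun a ha => (mem_inter.1 (h ha)).1)⟩
  generalize (A i ∪ A j).card = a at *
  generalize (A i ∩ A j).card = b at *
  generalize (A i).card = c at *
  generalize (A j).card = d at *
  obtain ⟨s, rfl⟩ := Nat.exists_eq_add_of_lt c2
  obtain ⟨t, rfl⟩ := Nat.exists_eq_add_of_lt c3
  have : a = b + s + 1 + t + 1 := by omega
  subst this
  nlinarith

lemma sum_update_sub (R : Finset ρ) (y : ρ → G) {r0 : ρ} (h : r0 ∈ R) (a : G) :
    ∑ r ∈ R, Function.update y r0 a r - ∑ r ∈ R, y r = a - y r0 := by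
  rw [sum_update_of_mem h, ← add_sum_erase R y h, ← erase_eq]
  abel

lemma uncov {A : ι → Finset G} {i j : ι} (hij : i ≠ j) {R : Finset ρ} {p : ρ → G}
    {H L : AddSubgroup G} (hL : L ≤ H) {σ : ρ → ι} {y : ρ → G} (hr : Rep A R p H σ y)
    (hno : ∀ τ z, Rep (unc A i j) R p H τ z → ∑ r ∈ R, z r - ∑ r ∈ R, y r ∉ L) :
    ∃ r1 ∈ R, ∃ r2 ∈ R, r1 ≠ r2 ∧ σ r1 = i ∧ σ r2 = j ∧
      (∀ r, r = r1 ∨ r = r2 → (∀ z ∈ A i, z ∈ A j → z - y r ∉ L) ∧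
        ∀ k, k ≠ i → k ≠ j → (∃ a ∈ A k, a - y r ∈ L) → ∃ s ∈ R, s ≠ r1 ∧ s ≠ r2 ∧ σ s = k) := by
  have norep : ∀ (τ : ρ → ι) (r0 : ρ) (a : G), r0 ∈ R → Set.InjOn τ R → a - y r0 ∈ L →
      (∀ r ∈ R, r ≠ r0 → y r ∈ unc A i j (τ r)) → a ∈ unc A i j (τ r0) → False := by
    intro τ r0 a hr0 hτ ha h1 h2
    refine hno τ (Function.update y r0 a) ⟨hτ, fun r hrR => ?_⟩ ?_
    · by_cases e : r = r0
      · subst e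
        rw [Function.update_self]
        refine ⟨h2, ?_⟩
        have := H.add_mem (hL ha) (hr.2 r hrR).2
        convert this using 1; abel
      · rw [Function.update_of_ne e]
        exact ⟨h1 r hrR e, (hr.2 r hrR).2⟩
    · rw [sum_update_sub R y hr0]; exact ha
  have hy : ∀ r ∈ R, y r ∈ A (σ r) := fun r h => (hr.2 r h).1
  have hstay : ∀ r ∈ R, σ r ≠ j → y r ∈ unc A i j (σ r) := by
    intro r h e
    have := hy r h
    by_cases e1 : σ r = i
    · rw [e1] at this ⊢; rw [unc_i]; exact mem_union_left _ this
    · rwa [unc_o A e1 e]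
  have hsw : ∀ r ∈ R, σ r ≠ i → y r ∈ unc A i j (Equiv.swap i j (σ r)) := by
    intro r h e
    have := hy r h
    by_cases e1 : σ r = j
    · rw [e1] at this ⊢; rw [Equiv.swap_apply_right, unc_i]; exact mem_union_right _ this
    · rwa [Equiv.swap_apply_of_ne_of_ne e e1, unc_o A e e1]
  have hj : ∃ r2 ∈ R, σ r2 = j := by
    by_contra hc
    push Not at hc
    exact hno σ y ⟨hr.1, fun r h => ⟨hstay r h (hc r h), (hr.2 r h).2⟩⟩ (by simp [L.zero_mem])
  have hi : ∃ r1 ∈ R, σ r1 = i := by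
    by_contra hc
    push Not at hc
    exact hno _ y ⟨rep_swap i j hr.1, fun r h => ⟨hsw r h (hc r h), (hr.2 r h).2⟩⟩
      (by simp [L.zero_mem])
  obtain ⟨r1, hr1, e1⟩ := hi
  obtain ⟨r2, hr2, e2⟩ := hj
  have hne : r1 ≠ r2 := by rintro rfl; exact hij (e1.symm.trans e2)
  have o1 : ∀ r ∈ R, r ≠ r1 → σ r ≠ i := fun r h hn e => hn (hr.1 h hr1 (e.trans e1.symm))
  have o2 : ∀ r ∈ R, r ≠ r2 → σ r ≠ j := fun r h hn e => hn (hr.1 h hr2 (e.trans e2.symm))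
  have hinj : ∀ (τ : ρ → ι) (r0 : ρ) (k : ι), Set.InjOn τ R → (∀ s ∈ R, s ≠ r0 → τ s ≠ k) →
      Set.InjOn (Function.update τ r0 k) R := by
    intro τ r0 k hτ hk a ha b hb e
    by_cases ea : a = r0
    · by_cases eb : b = r0
      · rw [ea, eb]
      · rw [ea, Function.update_self, Function.update_of_ne eb] at e
        exact absurd e.symm (hk b hb eb)
    · by_cases eb : b = r0
      · rw [eb, Function.update_self, Function.update_of_ne ea] at e
        exact absurd e (hk a ha ea)
      · rw [Function.update_of_ne ea, Function.update_of_ne eb] at e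
        exact hτ ha hb e
  refine ⟨r1, hr1, r2, hr2, hne, e1, e2, ?_⟩
  rintro r (rfl | rfl)
  · constructor
    · intro z hz1 hz2 hz
      refine norep (fun s => Equiv.swap i j (σ s)) r z hr1 (rep_swap i j hr.1) hz
        (fun s hs hn => hsw s hs (o1 s hs hn)) ?_
      simp only [e1, Equiv.swap_apply_left, unc_j A hij]
      exact mem_inter.2 ⟨hz1, hz2⟩
    · rintro k hki hkj ⟨a, ha, hal⟩
      by_contra hc
      push Not at hc
      refine norep (Function.update (fun s => Equiv.swap i j (σ s)) r k) r a hr1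
        (hinj _ _ _ (rep_swap i j hr.1) ?_) hal ?_ ?_
      · intro s hs hn e
        have hk : Equiv.swap i j k = k := Equiv.swap_apply_of_ne_of_ne hki hkj
        have : σ s = k := by
          apply (Equiv.swap i j).injective; rw [hk]; exact e
        by_cases e3 : s = r2
        · subst e3; exact hkj (this.symm.trans e2)
        · exact hc s hs hn e3 this
      · intro s hs hn
        rw [Function.update_of_ne hn]
        exact hsw s hs (o1 s hs hn)
      · rw [Function.update_self, unc_o A hki hkj]; exact ha
  · constructor
    · intro z hz1 hz2 hz
      refine norep σ r z hr2 hr.1 hz (fun s hs hn => hstay s hs (o2 s hs hn)) ?_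
      rw [e2, unc_j A hij]
      exact mem_inter.2 ⟨hz1, hz2⟩
    · rintro k hki hkj ⟨a, ha, hal⟩
      by_contra hc
      push Not at hc
      refine norep (Function.update σ r k) r a hr2
        (hinj _ _ _ hr.1 ?_) hal ?_ ?_
      · intro s hs hn e
        by_cases e3 : s = r1
        · subst e3; exact hki (e.symm.trans e1)
        · exact hc s hs e3 hn e
      · intro s hs hn
        rw [Function.update_of_ne hn]
        exact hstay s hs (o2 s hs hn)
      · rw [Function.update_self, unc_o A hki hkj]; exact ha

lemma ext_rep {A A0 : ι → Finset G} {i j : ι} (hij : i ≠ j) (h0i : A0 i = ∅) (h0j : A0 j = ∅)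
    (h0 : ∀ k, k ≠ i → k ≠ j → A0 k = A k) {R : Finset ρ} {r1 r2 : ρ} (hr1 : r1 ∈ R)
    (hr2 : r2 ∈ R) (hne : r1 ≠ r2) {y : ρ → G} {L : AddSubgroup G} {e u v : G}
    (he : e ∈ DD A0 ((R.erase r1).erase r2) y L) (hu : u ∈ A i) (hu' : u - y r1 ∈ L)
    (hv : v ∈ A j) (hv' : v - y r2 ∈ L) : e + (u + v) ∈ DD A R y L := by
  obtain ⟨σ, z, h, rfl⟩ := mem_DD.1 he
  have hs : ∀ r, r ∈ R → r ≠ r1 → r ≠ r2 → r ∈ (R.erase r1).erase r2 := by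
    intro r h h1 h2; simp [h, h1, h2]
  have hσ : ∀ r, r ∈ R → r ≠ r1 → r ≠ r2 → σ r ≠ i ∧ σ r ≠ j := by
    intro r hr h1 h2
    have := (h.2 r (hs r hr h1 h2)).1
    constructor
    · intro e; rw [e, h0i] at this; simp at this
    · intro e; rw [e, h0j] at this; simp at this
  refine mem_DD.2 ⟨fun r => if r = r1 then i else if r = r2 then j else σ r,
    fun r => if r = r1 then u else if r = r2 then v else z r, ⟨?_, ?_⟩, ?_⟩
  · intro a ha b hb e
    have ha' := hσ a ha
    have hb' := hσ b hb
    have hh := fun h1 h2 h3 h4 => @h.1 a (hs a ha h1 h2) b (hs b hb h3 h4)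
    simp only at e
    split_ifs at e <;> grind
  · intro r hr
    by_cases e1 : r = r1
    · subst e1; simp only [if_true]; exact ⟨hu, hu'⟩
    by_cases e2 : r = r2
    · subst e2; simp only [e1, if_true, if_false]; exact ⟨hv, hv'⟩
    simp only [e1, e2, if_false]
    have h3 := h.2 r (hs r hr e1 e2)
    rw [h0 _ (hσ r hr e1 e2).1 (hσ r hr e1 e2).2] at h3
    exact h3
  · rw [← add_sum_erase R _ hr1, ← add_sum_erase (R.erase r1) _ (mem_erase.2 ⟨hne.symm, hr2⟩)]
    have : ∀ r ∈ (R.erase r1).erase r2,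
        (if r = r1 then u else if r = r2 then v else z r) = z r := by
      intro r hr
      simp only [mem_erase] at hr
      simp [hr.1, hr.2.1]
    rw [sum_congr rfl this]
    simp only [if_true, hne.symm, if_false]
    abel

lemma pig {L : AddSubgroup G} {a b : Finset G} {u v g : G} (ha : ∀ z ∈ a, z - u ∈ L)
    (hb : ∀ z ∈ b, z - v ∈ L) (h : oc L < a.card + b.card) (hg : g - (u + v) ∈ L) :
    g ∈ a + b := by
  have h1 : a ⊆ univ.filter (fun z : G => z - u ∈ L) := fun z hz => by simp [ha z hz]
  have h2 : b.image (fun z => g - z) ⊆ univ.filter (fun z : G => z - u ∈ L) := by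
    intro z hz
    obtain ⟨w, hw, rfl⟩ := mem_image.1 hz
    simp only [mem_filter, mem_univ, true_and]
    have := L.sub_mem hg (hb w hw)
    convert this using 1; abel
  have h3 : (b.image (fun z => g - z)).card = b.card :=
    card_image_of_injective _ (fun _ _ e => sub_right_injective e)
  obtain ⟨z, hz⟩ := inter_nonempty_of_card_lt_card_add_card h1 h2
    (by rw [card_coset, h3]; exact h)
  obtain ⟨hz1, hz2⟩ := mem_inter.1 hz
  obtain ⟨w, hw, rfl⟩ := mem_image.1 hz2
  have := add_mem_add hz1 hw
  simpa using this

lemma sat_union (N : AddSubgroup G) (C D : Finset G) : sat N (C ∪ D) = sat N C ∪ sat N D := by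
  ext g
  simp only [mem_sat, mem_union]
  constructor
  · rintro ⟨c, h | h, h'⟩
    exacts [Or.inl ⟨c, h, h'⟩, Or.inr ⟨c, h, h'⟩]
  · rintro (⟨c, h, h'⟩ | ⟨c, h, h'⟩)
    exacts [⟨c, Or.inl h, h'⟩, ⟨c, Or.inr h, h'⟩]

lemma zcard {a1 a2 b1 b2 : Finset G} (ha : a1.Nonempty) (hb : b2.Nonempty) (N : AddSubgroup G)
    (hN : ∀ K, Per K (sat N ((a1 + b2) ∪ (a2 + b1))) → K ≤ N) :
    (sat N a1).card + (sat N b2).card ≤ (sat N ((a1 + b2) ∪ (a2 + b1))).card + oc N ∨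
    (sat N a2).card + (sat N b1).card ≤ (sat N ((a1 + b2) ∪ (a2 + b1))).card + oc N := by
  by_cases h : a2.Nonempty ∧ b1.Nonempty
  · obtain ⟨K1, p1, q1⟩ := kneser_weak (sat N a1) (sat N b2) (sat_nonempty ha) (sat_nonempty hb)
    obtain ⟨K2, p2, q2⟩ := kneser_weak (sat N a2) (sat N b1) (sat_nonempty h.1) (sat_nonempty h.2)
    obtain ⟨K, p, q⟩ := union_good (min ((sat N a1).card + (sat N b2).card)
      ((sat N a2).card + (sat N b1).card)) K1 K2 _ _ p1 p2 (by omega) (by omega)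
    rw [← sat_add, ← sat_add, ← sat_union] at p q
    have := oc_mono (hN K p)
    omega
  · have he : a2 + b1 = ∅ := by
      rw [add_eq_empty, ← not_nonempty_iff_eq_empty, ← not_nonempty_iff_eq_empty]
      tauto
    rw [he, union_empty] at hN ⊢
    exact Or.inl (kneser a1 b2 ha hb N hN)

lemma xcard {A1 A2 : Finset G} {N L : AddSubgroup G} (hN : N ≤ L) (q : G) :
    oc L ≤ (univ.filter (fun g => g - q ∈ L ∧ g ∉ sat N (A1 ∪ A2))).card +
      (sat N (A1.filter (fun g => g - q ∈ L))).card +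
      (sat N (A2.filter (fun g => g - q ∈ L))).card := by
  rw [← card_coset L q]
  refine le_trans ?_ (Nat.add_le_add_right (card_union_le _ _) _)
  refine le_trans (card_le_card ?_) (card_union_le _ _)
  intro g hg
  simp only [mem_filter, mem_univ, true_and] at hg
  by_cases h : g ∈ sat N (A1 ∪ A2)
  · obtain ⟨a, ha, h'⟩ := mem_sat.1 h
    have h2 : a - q ∈ L := by
      have := L.sub_mem hg (hN h')
      convert this using 1; abel
    rcases mem_union.1 ha with ha | ha
    · exact mem_union_left _ (mem_union_right _ (mem_sat.2 ⟨a, by simp [ha, h2], h'⟩))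
    · exact mem_union_right _ (mem_sat.2 ⟨a, by simp [ha, h2], h'⟩)
  · exact mem_union_left _ (mem_union_left _ (by simp [hg, h]))

lemma rest_mono (A : ι → Finset G) (i j : ι) {N L : AddSubgroup G} (hN : N ≤ L) (g : G) :
    (univ.filter (fun k => (k ≠ i ∧ k ≠ j) ∧ ∃ a ∈ A k, a - g ∈ N)).card ≤
    (univ.filter (fun k => (k ≠ i ∧ k ≠ j) ∧ ∃ a ∈ A k, a - g ∈ L)).card := by
  apply card_le_card
  intro k
  simp only [mem_filter, mem_univ, true_and]
  rintro ⟨h, a, ha, h'⟩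
  exact ⟨h, a, ha, hN h'⟩

lemma min_arith1 (l n n' s s' : ℕ) (hl : 2 ≤ l) (hn : n' ≤ n) (hs : s' ≤ s) (hs2 : s ≤ 2) :
    min (((l - 2 : ℕ)) : ℤ) (n : ℤ) - min (((l - 2 : ℕ)) : ℤ) (n' : ℤ) ≤
    min (l : ℤ) ((n + s : ℕ) : ℤ) - min (l : ℤ) ((n' + s' : ℕ) : ℤ) := by
  omega

lemma min_arith2 (l n n' s : ℕ) (hl : 2 ≤ l) (hn : n' ≤ n) (hs : 1 ≤ s) (hn2 : n ≤ l - 2) :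
    min (((l - 2 : ℕ)) : ℤ) (n : ℤ) - min (((l - 2 : ℕ)) : ℤ) (n' : ℤ) + 1 ≤
    min (l : ℤ) ((n + s : ℕ) : ℤ) - min (l : ℤ) ((n' : ℕ) : ℤ) := by
  omega

lemma pointwise {A A0 : ι → Finset G} {i j : ι} (hij : i ≠ j) (h0i : A0 i = ∅) (h0j : A0 j = ∅)
    (h0 : ∀ k, k ≠ i → k ≠ j → A0 k = A k) {N L : AddSubgroup G} (hN : N ≤ L) {l : ℕ}
    (hl : 2 ≤ l) (X : Finset G) (hX : ∀ g ∈ X, g ∉ sat N (A i ∪ A j) ∧ g ∈ sat L (A i ∪ A j) ∧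
      (univ.filter (fun k => (k ≠ i ∧ k ≠ j) ∧ ∃ a ∈ A k, a - g ∈ L)).card ≤ l - 2) (g : G) :
    mu (l - 2) A0 L g - mu (l - 2) A0 N g + (if g ∈ X then 1 else 0) ≤
      mu l (unc A i j) L g - mu l (unc A i j) N g := by
  have hm := rest_mono A i j hN g
  have c0 : ∀ M : AddSubgroup G, cnt A0 M g =
      (univ.filter (fun k => (k ≠ i ∧ k ≠ j) ∧ ∃ a ∈ A k, a - g ∈ M)).card := by
    intro M
    rw [cnt_split A0 hij, rest_congr A0 A h0, h0i, h0j]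
    simp
  have c1 : ∀ M : AddSubgroup G, cnt (unc A i j) M g =
      (univ.filter (fun k => (k ≠ i ∧ k ≠ j) ∧ ∃ a ∈ A k, a - g ∈ M)).card +
      ((if ∃ a ∈ A i ∪ A j, a - g ∈ M then 1 else 0) +
        (if ∃ a ∈ A i ∩ A j, a - g ∈ M then 1 else 0)) := by
    intro M
    rw [cnt_split _ hij, rest_congr (unc A i j) A (fun k h h' => unc_o A h h'), unc_i,
      unc_j A hij, add_assoc]
  unfold mu
  rw [c0, c0, c1, c1]
  by_cases hg : g ∈ X
  · obtain ⟨h1, h2, h3⟩ := hX g hg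
    have e1 : ¬ ∃ a ∈ A i ∪ A j, a - g ∈ N := by
      rintro ⟨a, ha, h⟩
      exact h1 (mem_sat.2 ⟨a, ha, by rw [← neg_sub]; exact N.neg_mem h⟩)
    have e2 : ¬ ∃ a ∈ A i ∩ A j, a - g ∈ N := by
      rintro ⟨a, ha, h⟩
      exact e1 ⟨a, mem_union_left _ (mem_inter.1 ha).1, h⟩
    have e3 : ∃ a ∈ A i ∪ A j, a - g ∈ L := by
      obtain ⟨a, ha, h⟩ := mem_sat.1 h2
      exact ⟨a, ha, by rw [← neg_sub]; exact L.neg_mem h⟩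
    rw [if_neg e1, if_neg e2, if_pos e3, if_pos hg, add_zero, add_zero]
    exact min_arith2 _ _ _ _ hl hm (by omega) h3
  · rw [if_neg hg, add_zero]
    have m1 : (∃ a ∈ A i ∪ A j, a - g ∈ N) → (∃ a ∈ A i ∪ A j, a - g ∈ L) := by
      rintro ⟨a, ha, h⟩; exact ⟨a, ha, hN h⟩
    have m2 : (∃ a ∈ A i ∩ A j, a - g ∈ N) → (∃ a ∈ A i ∩ A j, a - g ∈ L) := by
      rintro ⟨a, ha, h⟩; exact ⟨a, ha, hN h⟩
    apply min_arith1 _ _ _ _ _ hl hm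
    · apply Nat.add_le_add
      · split_ifs <;> first | omega | exact absurd (m1 ‹_›) ‹_›
      · split_ifs <;> first | omega | exact absurd (m2 ‹_›) ‹_›
    · split_ifs <;> omega

/-- The step in the uncrossing case. -/
lemma step1 {H L : AddSubgroup G} (A : ι → Finset G) {i j : ι} (hij : i ≠ j) (R : Finset ρ)
    (p : ρ → G) (hL : L ≤ H) (IH : ∀ (A : ι → Finset G) (R : Finset ρ) (p : ρ → G), Goal L A R p)
    {c x : G} (hc : c ∈ DD A R p H) (hx : x ∈ L) (hxc : x + c ∉ DD A R p H) :
    ∃ N' < L, ∃ D' ⊆ DD A R p H, Per N' D' ∧ (∀ d ∈ D', d - c ∈ L) ∧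
      ((R.card : ℤ) - 1) * oc L - ∑ g ∈ supp R p H, mu R.card (unc A i j) L g ≤
      D'.card + (((R.card : ℤ) - 1) * oc N' -
        ∑ g ∈ supp R p H, mu R.card (unc A i j) N' g) := by
  obtain ⟨σ, y, hrep, rfl⟩ := mem_DD.1 hc
  by_cases hno : ∀ τ z, Rep (unc A i j) R p H τ z → ∑ r ∈ R, z r - ∑ r ∈ R, y r ∉ L
  swap
  · push Not at hno
    obtain ⟨τ, z, h1, h2⟩ := hno
    exact direct_step (unc A i j) R p _ (DD_unc A hij R p H) hL h1 (IH _ _ _) h2 hx hxc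
  obtain ⟨r1, hr1, r2, hr2, hne, e1, e2, hun⟩ := uncov hij hL hrep hno
  have hy : ∀ r ∈ R, y r - p r ∈ H := fun r hr => (hrep.2 r hr).2
  have hyi : y r1 ∈ A i := e1 ▸ (hrep.2 r1 hr1).1
  have hyj : y r2 ∈ A j := e2 ▸ (hrep.2 r2 hr2).1
  obtain ⟨A0, hA0⟩ : ∃ A0 : ι → Finset G, A0 = fun k => if k = i ∨ k = j then ∅ else A k :=
    ⟨_, rfl⟩
  have h0i : A0 i = ∅ := by simp [hA0]
  have h0j : A0 j = ∅ := by simp [hA0]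
  have h0 : ∀ k, k ≠ i → k ≠ j → A0 k = A k := by
    intro k h h'; simp [hA0, h, h']
  obtain ⟨S, hS⟩ : ∃ S, S = (R.erase r1).erase r2 := ⟨_, rfl⟩
  have hSc : S.card + 2 = R.card := by
    rw [hS]
    have := card_erase_add_one hr1
    have := card_erase_add_one (mem_erase.2 ⟨hne.symm, hr2⟩)
    omega
  have hSR : S ⊆ R := by rw [hS]; exact (erase_subset _ _).trans (erase_subset _ _)
  have hmS : ∀ r, r ∈ S ↔ r ≠ r2 ∧ r ≠ r1 ∧ r ∈ R := by
    intro r; rw [hS, mem_erase, mem_erase]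
  obtain ⟨E, hE⟩ : ∃ E, E = DD A0 S y L := ⟨_, rfl⟩
  have hEne : E.Nonempty := by
    refine ⟨∑ r ∈ S, y r, ?_⟩
    rw [hE]
    refine mem_DD.2 ⟨σ, y, ⟨hrep.1.mono (by exact_mod_cast hSR), fun r hr => ⟨?_, by simp [L.zero_mem]⟩⟩, rfl⟩
    obtain ⟨n2, n1, hr⟩ := (hmS r).1 hr
    rw [h0]
    · exact (hrep.2 r hr).1
    · intro e; exact n1 (hrep.1 hr hr1 (e.trans e1.symm))
    · intro e; exact n2 (hrep.1 hr hr2 (e.trans e2.symm))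
  let fl : Finset G → ρ → Finset G := fun C r => C.filter (fun g => g - y r ∈ L)
  have hfl : ∀ C r z, z ∈ fl C r ↔ z ∈ C ∧ z - y r ∈ L := by
    intro C r z; simp [fl]
  obtain ⟨Z, hZ⟩ : ∃ Z, Z = (fl (A i) r1 + fl (A j) r2) ∪ (fl (A i) r2 + fl (A j) r1) := ⟨_, rfl⟩
  have ha1 : (fl (A i) r1).Nonempty := ⟨y r1, (hfl _ _ _).2 ⟨hyi, by simp [L.zero_mem]⟩⟩
  have hb2 : (fl (A j) r2).Nonempty := ⟨y r2, (hfl _ _ _).2 ⟨hyj, by simp [L.zero_mem]⟩⟩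
  have hZne : Z.Nonempty := by
    rw [hZ]; exact (ha1.add hb2).mono subset_union_left
  have hsub1 : E + Z ⊆ DD A R y L := by
    intro d hd
    obtain ⟨e, he, z, hz, rfl⟩ := mem_add.1 hd
    rw [hE, hS] at he
    rw [hZ] at hz
    rcases mem_union.1 hz with hz | hz
    · obtain ⟨u, hu, v, hv, rfl⟩ := mem_add.1 hz
      rw [hfl] at hu hv
      exact ext_rep hij h0i h0j h0 hr1 hr2 hne he hu.1 hu.2 hv.1 hv.2
    · obtain ⟨u, hu, v, hv, rfl⟩ := mem_add.1 hz
      rw [hfl] at hu hv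
      rw [add_comm u v]
      exact ext_rep hij.symm h0j h0i (fun k h h' => h0 k h' h) hr1 hr2 hne he hv.1 hv.2 hu.1 hu.2
  have hsub : E + Z ⊆ DD A R p H := hsub1.trans (DD_sub hL hy)
  have hco : ∀ d ∈ E + Z, d - ∑ r ∈ R, y r ∈ L := fun d hd => DD_coset (hsub1 hd)
  have hlt := stb_lt (hEne.add hZne) hsub hco hx hxc
  obtain ⟨N, hNdef⟩ : ∃ N, N = stb (E + Z) := ⟨_, rfl⟩
  rw [← hNdef] at hlt
  have hper : Per N (E + Z) := by rw [hNdef]; exact per_stb _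
  have hmax : ∀ M, Per M (E + Z) → M ≤ N := by
    intro M hM; rw [hNdef]; exact le_stb_of_per hM
  have hsat : sat N E + sat N Z = E + Z := by rw [← sat_add, sat_eq_of_per hper]
  refine ⟨N, hlt, E + Z, hsub, hper, hco, ?_⟩
  -- Induction hypothesis for the reduced family
  have key := IH A0 S y (by rw [← hE]; exact hEne) N hlt.le (by
    rw [← hE]
    intro M hM
    apply hmax
    rw [← hsat]
    exact per_add hM _)
  rw [← hE] at key
  have kn := kneser E Z hEne hZne N (by rw [sat_eq_of_per hper]; exact hmax)
  rw [sat_eq_of_per hper] at kn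
  have zc := zcard (a1 := fl (A i) r1) (a2 := fl (A i) r2) (b1 := fl (A j) r1)
    (b2 := fl (A j) r2) ha1 hb2 N (by
      rw [← hZ]
      intro K hK
      apply hmax
      rw [← hsat, add_comm]
      exact per_add hK _)
  rw [← hZ] at zc
  have hfls : ∀ C r, ∀ z ∈ sat N (fl C r), z - y r ∈ L := by
    intro C r z hz
    obtain ⟨w, hw, h⟩ := mem_sat.1 hz
    have := L.add_mem (hlt.le h) ((hfl _ _ _).1 hw).2
    convert this using 1; abel
  have hpig : ∀ C C' s s', y s + y s' = y r1 + y r2 → fl C s + fl C' s' ⊆ Z →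
      (sat N (fl C s)).card + (sat N (fl C' s')).card ≤ oc L := by
    intro C C' s s' hss hsubZ
    by_contra hcon
    apply hxc
    apply hsub
    obtain ⟨e, he⟩ := hEne
    have he' : e - ∑ r ∈ S, y r ∈ L := by rw [hE] at he; exact DD_coset he
    have hsum : ∑ r ∈ R, y r = y r1 + (y r2 + ∑ r ∈ S, y r) := by
      rw [hS, add_sum_erase _ y (mem_erase.2 ⟨hne.symm, hr2⟩), add_sum_erase _ y hr1]
    have h1 : (x + ∑ r ∈ R, y r - e) - (y s + y s') ∈ L := by
      rw [hss, hsum]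
      have := L.sub_mem hx he'
      convert this using 1; abel
    have h2 := pig (hfls C s) (hfls C' s') (by omega) h1
    rw [← sat_add] at h2
    have h3 : x + ∑ r ∈ R, y r - e ∈ sat N Z := by
      obtain ⟨w, hw, h⟩ := mem_sat.1 h2
      exact mem_sat.2 ⟨w, hsubZ hw, h⟩
    rw [← hsat]
    have := add_mem_add (subset_sat N E he) h3
    simpa using this
  have p12 := hpig (A i) (A j) r1 r2 rfl (by rw [hZ]; exact subset_union_left)
  have p21 := hpig (A i) (A j) r2 r1 (add_comm _ _) (by rw [hZ]; exact subset_union_right)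
  -- The extra points
  let X : ρ → Finset G := fun r => univ.filter (fun g => g - y r ∈ L ∧ g ∉ sat N (A i ∪ A j))
  have hXm : ∀ r g, g ∈ X r ↔ g - y r ∈ L ∧ g ∉ sat N (A i ∪ A j) := by
    intro r g; simp [X]
  have x1 := xcard (A1 := A i) (A2 := A j) hlt.le (y r1)
  have x2 := xcard (A1 := A i) (A2 := A j) hlt.le (y r2)
  change oc L ≤ (X r1).card + (sat N (fl (A i) r1)).card + (sat N (fl (A j) r1)).card at x1
  change oc L ≤ (X r2).card + (sat N (fl (A i) r2)).card + (sat N (fl (A j) r2)).card at x2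
  have hfin : oc L ≤ (sat N Z).card + oc N + (X r1 ∪ X r2).card := by
    by_cases hq : y r1 - y r2 ∈ L
    · have hflq : ∀ C, fl C r1 = fl C r2 := by
        intro C
        ext z
        rw [hfl, hfl]
        constructor
        · rintro ⟨h, h'⟩; refine ⟨h, ?_⟩
          have := L.add_mem h' hq
          convert this using 1; abel
        · rintro ⟨h, h'⟩; refine ⟨h, ?_⟩
          have := L.sub_mem h' hq
          convert this using 1; abel
      rw [hflq, hflq] at x1 zc
      have := card_le_card (subset_union_left (s₁ := X r1) (s₂ := X r2))
      omega
    · have hd : Disjoint (X r1) (X r2) := by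
        rw [disjoint_left]
        intro z h1 h2
        apply hq
        have := L.sub_mem ((hXm _ _).1 h2).1 ((hXm _ _).1 h1).1
        convert this using 1; abel
      rw [card_union_of_disjoint hd]
      omega
  have hXp : ∀ g ∈ X r1 ∪ X r2, g ∉ sat N (A i ∪ A j) ∧ g ∈ sat L (A i ∪ A j) ∧
      (univ.filter (fun k => (k ≠ i ∧ k ≠ j) ∧ ∃ a ∈ A k, a - g ∈ L)).card ≤ R.card - 2 := by
    have gen : ∀ r g, (r = r1 ∨ r = r2) → g ∈ X r → y r ∈ A i ∪ A j →
        g ∉ sat N (A i ∪ A j) ∧ g ∈ sat L (A i ∪ A j) ∧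
        (univ.filter (fun k => (k ≠ i ∧ k ≠ j) ∧ ∃ a ∈ A k, a - g ∈ L)).card ≤ R.card - 2 := by
      intro r g hr hg hyr
      obtain ⟨g1, g2⟩ := (hXm _ _).1 hg
      refine ⟨g2, mem_sat.2 ⟨y r, hyr, g1⟩, ?_⟩
      have : (univ.filter (fun k => (k ≠ i ∧ k ≠ j) ∧ ∃ a ∈ A k, a - g ∈ L)) ⊆ S.image σ := by
        intro k hk
        simp only [mem_filter, mem_univ, true_and] at hk
        obtain ⟨⟨k1, k2⟩, a, ha, hag⟩ := hk
        obtain ⟨s, hs, s1, s2, es⟩ := (hun r hr).2 k k1 k2 ⟨a, ha, by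
          have := L.add_mem hag g1
          convert this using 1; abel⟩
        exact mem_image.2 ⟨s, (hmS s).2 ⟨s2, s1, hs⟩, es⟩
      have := (card_le_card this).trans card_image_le
      omega
    intro g hg
    rcases mem_union.1 hg with hg | hg
    · exact gen r1 g (Or.inl rfl) hg (mem_union_left _ hyi)
    · exact gen r2 g (Or.inr rfl) hg (mem_union_right _ hyj)
  have hXs : X r1 ∪ X r2 ⊆ supp R p H := by
    have gen : ∀ r ∈ R, X r ⊆ supp R p H := by
      intro r hr g hg
      obtain ⟨g1, g2⟩ := (hXm _ _).1 hg
      simp only [supp, mem_filter, mem_univ, true_and]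
      refine ⟨r, hr, ?_⟩
      have := H.add_mem (hL g1) (hy r hr)
      convert this using 1; abel
    exact union_subset (gen r1 hr1) (gen r2 hr2)
  have pw := sum_le_sum (fun g (_ : g ∈ supp R p H) =>
    pointwise hij h0i h0j h0 hlt.le (l := R.card) (by omega) (X r1 ∪ X r2) hXp g)
  rw [sum_add_distrib, sum_sub_distrib (f := fun g => mu R.card (unc A i j) L g)] at pw
  have hXsum : ∑ g ∈ supp R p H, (if g ∈ X r1 ∪ X r2 then (1 : ℤ) else 0) =
      (X r1 ∪ X r2).card := by
    rw [sum_ite_mem, inter_eq_right.2 hXs]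
    simp
  rw [hXsum] at pw
  have hSc' : S.card = R.card - 2 := by omega
  have hss : ∑ g ∈ supp S y L, (mu S.card A0 L g - mu S.card A0 N g) ≤
      ∑ g ∈ supp R p H, (mu S.card A0 L g - mu S.card A0 N g) :=
    sum_le_sum_of_subset_of_nonneg (supp_sub hSR hL hy)
      (fun g _ _ => sub_nonneg.2 (mu_mono _ _ hlt.le g))
  rw [← hSc'] at pw
  have hSz : (S.card : ℤ) = R.card - 2 := by omega
  have kn' : ((sat N E).card : ℤ) + (sat N Z).card ≤ (E + Z).card + oc N := by exact_mod_cast kn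
  have hfin' : (oc L : ℤ) ≤ (sat N Z).card + oc N + (X r1 ∪ X r2).card := by exact_mod_cast hfin
  rw [hSz] at key
  linarith

/-- Assembly of the descent. -/
lemma assemble {H N : AddSubgroup G} (A B : ι → Finset G) (R : Finset ρ) (p : ρ → G)
    (hR : R.Nonempty) (hN : N ≤ H) (hD : ∀ L, Per L (DD A R p H) → L ≤ N)
    (hB1 : ∀ L ≤ N, ∀ g, cnt B L g = cnt A N g) (hB2 : ∀ g, cnt B H g ≤ cnt A H g)
    (start : ∃ L ≤ H, ∃ C ⊆ DD A R p H, Per L C ∧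
      (R.card : ℤ) * oc H - ∑ g ∈ supp R p H, mu R.card B H g ≤
        C.card + (((R.card : ℤ) - 1) * oc L - ∑ g ∈ supp R p H, mu R.card B L g))
    (step : ∀ L < H, ∀ c ∈ DD A R p H, ∀ x ∈ L, x + c ∉ DD A R p H →
      ∃ N' < L, ∃ D' ⊆ DD A R p H, Per N' D' ∧ (∀ d ∈ D', d - c ∈ L) ∧
      ((R.card : ℤ) - 1) * oc L - ∑ g ∈ supp R p H, mu R.card B L g ≤
      D'.card + (((R.card : ℤ) - 1) * oc N' - ∑ g ∈ supp R p H, mu R.card B N' g)) :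
    (R.card : ℤ) * oc H ≤ (DD A R p H).card + ((R.card : ℤ) - 1) * oc N
      + ∑ g ∈ supp R p H, (mu R.card A H g - mu R.card A N g) := by
  obtain ⟨L, hL, hC⟩ := start
  obtain ⟨L', hL', C, hCD, hineq⟩ := descent (DD A R p H) H N hD
    (fun L => ((R.card : ℤ) - 1) * oc L - ∑ g ∈ supp R p H, mu R.card B L g)
    ((R.card : ℤ) * oc H - ∑ g ∈ supp R p H, mu R.card B H g) (by
      intro L hL hC c hc x hx hxc
      rcases hL.lt_or_eq with h | h
      · exact step L h c hc x hx hxc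
      · exfalso
        subst h
        obtain ⟨C, hCD, hper, hineq⟩ := hC
        have hCe : C = ∅ := by
          rw [eq_empty_iff_forall_notMem]
          intro d hd
          apply hxc
          apply hCD
          have h1 := L.sub_mem (DD_coset hc) (DD_coset (hCD hd))
          have := hper _ (L.add_mem hx h1) d hd
          convert this using 1; abel
        rw [hCe] at hineq
        have : (0 : ℤ) < oc L := by exact_mod_cast oc_pos L
        simp only [card_empty, Nat.cast_zero] at hineq
        linarith) (oc L) L hL le_rfl hC
  have e1 : ∑ g ∈ supp R p H, mu R.card B L' g = ∑ g ∈ supp R p H, mu R.card A N g :=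
    sum_congr rfl (fun g _ => by unfold mu; rw [hB1 L' hL'])
  have e2 : ∑ g ∈ supp R p H, mu R.card B H g ≤ ∑ g ∈ supp R p H, mu R.card A H g :=
    sum_le_sum (fun g _ => by have := hB2 g; unfold mu; omega)
  have e3 : (C.card : ℤ) ≤ (DD A R p H).card := by exact_mod_cast card_le_card hCD
  have e4 : ((R.card : ℤ) - 1) * oc L' ≤ ((R.card : ℤ) - 1) * oc N := by
    apply mul_le_mul_of_nonneg_left
    · exact_mod_cast oc_mono hL'
    · have := hR.card_pos; omega
  rw [sum_sub_distrib]
  linarith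

lemma mem_sum_sets (R : Finset ρ) (W : ρ → Finset G) :
    ∀ g, g ∈ ∑ r ∈ R, W r ↔ ∃ z : ρ → G, (∀ r ∈ R, z r ∈ W r) ∧ ∑ r ∈ R, z r = g := by
  induction R using Finset.induction_on with
  | empty => intro g; simp [eq_comm]
  | insert a s ha ih =>
    intro g
    rw [sum_insert ha, mem_add]
    constructor
    · rintro ⟨u, hu, v, hv, rfl⟩
      obtain ⟨z, hz, rfl⟩ := (ih v).1 hv
      have hne : ∀ r ∈ s, r ≠ a := fun r hr e => ha (e ▸ hr)
      refine ⟨Function.update z a u, ?_, ?_⟩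
      · intro r hr
        by_cases e : r = a
        · subst e; rwa [Function.update_self]
        · rw [Function.update_of_ne e]
          exact hz r ((mem_insert.1 hr).resolve_left e)
      · rw [sum_insert ha, Function.update_self]
        congr 1
        exact sum_congr rfl (fun r hr => Function.update_of_ne (hne r hr) _ _)
    · rintro ⟨z, hz, rfl⟩
      rw [sum_insert ha]
      exact ⟨z a, hz a (mem_insert_self _ _), _,
        (ih _).2 ⟨z, fun r hr => hz r (mem_insert_of_mem hr), rfl⟩, rfl⟩

lemma base_point (A : ι → Finset G) {R : Finset ρ} {p : ρ → G} {H L : AddSubgroup G}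
    (hL : L ≤ H) {σ : ρ → ι} {y : ρ → G} (hrep : Rep A R p H σ y)
    (hbase : ∀ j, (∀ r ∈ R, σ r ≠ j) → ∀ r ∈ R, A j ⊆ A (σ r)) (g : G) :
    ((R.filter (fun r => g - p r ∈ H ∧ g ∉ sat L (A (σ r)))).card : ℤ) ≤
      mu R.card A H g - mu R.card A L g := by
  obtain ⟨S, hS⟩ : ∃ S, S = R.filter (fun r => g - p r ∈ H ∧ g ∉ sat L (A (σ r))) := ⟨_, rfl⟩
  rw [← hS]
  have hm : ∀ r, r ∈ S ↔ r ∈ R ∧ g - p r ∈ H ∧ g ∉ sat L (A (σ r)) := by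
    intro r; rw [hS, mem_filter]
  by_cases hne : S.Nonempty
  swap
  · rw [not_nonempty_iff_eq_empty] at hne
    rw [hne, card_empty, Nat.cast_zero]
    exact sub_nonneg.2 (mu_mono _ _ hL g)
  obtain ⟨r0, hr0⟩ := hne
  have hsatm : ∀ i, (∃ a ∈ A i, a - g ∈ L) → g ∈ sat L (A i) := by
    rintro i ⟨a, ha, h⟩
    exact mem_sat.2 ⟨a, ha, by rw [← neg_sub]; exact L.neg_mem h⟩
  have hin : ∀ i, (∃ a ∈ A i, a - g ∈ L) → ∃ r ∈ R, r ∉ S ∧ σ r = i := by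
    intro i hi
    by_contra hc
    by_cases h1 : ∀ r ∈ R, σ r ≠ i
    · apply ((hm r0).1 hr0).2.2
      obtain ⟨a, ha, h⟩ := mem_sat.1 (hsatm i hi)
      exact mem_sat.2 ⟨a, hbase i h1 r0 ((hm r0).1 hr0).1 ha, h⟩
    · push Not at h1
      obtain ⟨r, hr, e⟩ := h1
      apply hc
      refine ⟨r, hr, fun hrS => ?_, e⟩
      apply ((hm r).1 hrS).2.2
      rw [e]; exact hsatm i hi
  have hSR : S ⊆ R := by rw [hS]; exact filter_subset _ _
  have h1 : cnt A L g ≤ R.card - S.card := by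
    rw [← card_sdiff_of_subset hSR]
    refine le_trans (card_le_card (t := (R \ S).image σ) ?_) card_image_le
    intro i hi
    simp only [mem_filter, mem_univ, true_and] at hi
    obtain ⟨r, hr, hr', e⟩ := hin i hi
    exact mem_image.2 ⟨r, mem_sdiff.2 ⟨hr, hr'⟩, e⟩
  have h2 : cnt A L g + S.card ≤ cnt A H g := by
    have hci : (S.image σ).card = S.card :=
      card_image_of_injOn (hrep.1.mono (by exact_mod_cast hSR))
    rw [← hci]
    unfold cnt
    rw [← card_union_of_disjoint]
    · apply card_le_card
      intro i hi
      simp only [mem_filter, mem_univ, true_and]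
      rcases mem_union.1 hi with hi | hi
      · simp only [mem_filter, mem_univ, true_and] at hi
        obtain ⟨a, ha, h⟩ := hi
        exact ⟨a, ha, hL h⟩
      · obtain ⟨r, hr, rfl⟩ := mem_image.1 hi
        obtain ⟨h1, h2, _⟩ := (hm r).1 hr
        refine ⟨y r, (hrep.2 r h1).1, ?_⟩
        have := H.sub_mem (hrep.2 r h1).2 h2
        convert this using 1; abel
    · rw [disjoint_left]
      intro i hi hi'
      simp only [mem_filter, mem_univ, true_and] at hi
      obtain ⟨r, hr, rfl⟩ := mem_image.1 hi'
      exact ((hm r).1 hr).2.2 (hsatm _ hi)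
  have h3 := card_le_card hSR
  unfold mu
  omega

lemma base_start (A : ι → Finset G) {R : Finset ρ} {p : ρ → G} {H : AddSubgroup G}
    {σ : ρ → ι} {y : ρ → G} (hrep : Rep A R p H σ y)
    (hbase : ∀ j, (∀ r ∈ R, σ r ≠ j) → ∀ r ∈ R, A j ⊆ A (σ r)) :
    ∃ L ≤ H, ∃ C ⊆ DD A R p H, Per L C ∧
      (R.card : ℤ) * oc H - ∑ g ∈ supp R p H, mu R.card A H g ≤
        C.card + (((R.card : ℤ) - 1) * oc L - ∑ g ∈ supp R p H, mu R.card A L g) := by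
  obtain ⟨W, hW⟩ : ∃ W : ρ → Finset G, W = fun r => (A (σ r)).filter (fun g => g - p r ∈ H) :=
    ⟨_, rfl⟩
  have hWm : ∀ r g, g ∈ W r ↔ g ∈ A (σ r) ∧ g - p r ∈ H := by intro r g; simp [hW]
  have hyW : ∀ r ∈ R, y r ∈ W r := fun r hr => (hWm r _).2 (hrep.2 r hr)
  obtain ⟨C, hC⟩ : ∃ C, C = ∑ r ∈ R, W r := ⟨_, rfl⟩
  have hCD : C ⊆ DD A R p H := by
    intro g hg
    rw [hC, mem_sum_sets] at hg
    obtain ⟨z, hz, rfl⟩ := hg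
    exact mem_DD.2 ⟨σ, z, ⟨hrep.1, fun r hr => (hWm r _).1 (hz r hr)⟩, rfl⟩
  have hd : ∑ r ∈ R, y r ∈ C := by rw [hC, mem_sum_sets]; exact ⟨y, hyW, rfl⟩
  obtain ⟨L, hLd⟩ : ∃ L, L = stb C := ⟨_, rfl⟩
  have hper : Per L C := by rw [hLd]; exact per_stb C
  have hL : L ≤ H := by
    intro h hh
    have h1 := hper h hh _ hd
    have := H.sub_mem (DD_coset (hCD h1)) (DD_coset (hCD hd))
    convert this using 1; abel
  refine ⟨L, hL, C, hCD, hper, ?_⟩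
  have kn := kneser_multi W R (fun r hr => ⟨y r, hyW r hr⟩) L (by
    rw [← hC, sat_eq_of_per hper]
    intro M hM; rw [hLd]; exact le_stb_of_per hM)
  rw [← hC, sat_eq_of_per hper] at kn
  have pw := sum_le_sum (fun g (_ : g ∈ supp R p H) => base_point A hL hrep hbase g)
  have hr1 : ∀ r ∈ R, (oc H : ℤ) ≤ (sat L (W r)).card +
      ∑ g ∈ supp R p H, (if g - p r ∈ H ∧ g ∉ sat L (A (σ r)) then (1 : ℤ) else 0) := by
    intro r hr
    rw [sum_boole]
    norm_cast
    rw [← card_coset H (p r)]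
    refine le_trans (card_le_card ?_) (card_union_le _ _)
    intro g hg
    simp only [mem_filter, mem_univ, true_and] at hg
    by_cases h : g ∈ sat L (A (σ r))
    · obtain ⟨a, ha, h'⟩ := mem_sat.1 h
      refine mem_union_left _ (mem_sat.2 ⟨a, (hWm r a).2 ⟨ha, ?_⟩, h'⟩)
      have := H.sub_mem hg (hL h')
      convert this using 1; abel
    · refine mem_union_right _ ?_
      simp only [mem_filter, supp, mem_univ, true_and]
      exact ⟨⟨r, hr, hg⟩, hg, h⟩
  have hs := sum_le_sum hr1
  rw [sum_add_distrib, sum_comm, sum_const, nsmul_eq_mul] at hs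
  have he : ∑ g ∈ supp R p H, ∑ r ∈ R,
      (if g - p r ∈ H ∧ g ∉ sat L (A (σ r)) then (1 : ℤ) else 0) =
      ∑ g ∈ supp R p H, ((R.filter (fun r => g - p r ∈ H ∧ g ∉ sat L (A (σ r)))).card : ℤ) :=
    sum_congr rfl (fun g _ => by rw [sum_boole])
  rw [he] at hs
  rw [sum_sub_distrib] at pw
  linarith

lemma max_rep (A : ι → Finset G) {R : Finset ρ} {p : ρ → G} {H : AddSubgroup G}
    (hne : (DD A R p H).Nonempty) : ∃ σ y, Rep A R p H σ y ∧ ∀ τ z, Rep A R p H τ z →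
      ∑ r ∈ R, (A (τ r)).card ≤ ∑ r ∈ R, (A (σ r)).card := by
  obtain ⟨d, hd⟩ := hne
  obtain ⟨σ0, y0, h0, _⟩ := mem_DD.1 hd
  let S : Set ℕ := {n | ∃ σ y, Rep A R p H σ y ∧ ∑ r ∈ R, (A (σ r)).card = n}
  have hb : BddAbove S := by
    refine ⟨R.card * Fintype.card G, ?_⟩
    rintro n ⟨σ, y, _, rfl⟩
    refine (sum_le_card_nsmul R _ (Fintype.card G) (fun r _ => card_le_univ _)).trans ?_
    simp
  obtain ⟨σ, y, h, e⟩ := Nat.sSup_mem (s := S) ⟨_, σ0, y0, h0, rfl⟩ hb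
  refine ⟨σ, y, h, fun τ z h' => ?_⟩
  rw [e]
  exact le_csSup hb ⟨τ, z, h', rfl⟩

lemma goal_empty (H : AddSubgroup G) (A : ι → Finset G) (p : ρ → G) :
    Goal H A (∅ : Finset ρ) p := by
  intro hne N hN hmax
  have : DD A (∅ : Finset ρ) p H = 0 := by
    ext g
    rw [mem_DD, Finset.mem_zero]
    obtain ⟨d, hd⟩ := hne
    obtain ⟨σ, y, _, _⟩ := mem_DD.1 hd
    constructor
    · rintro ⟨σ, y, h, rfl⟩; simp
    · rintro rfl; exact ⟨σ, y, ⟨by simp, by simp⟩, by simp⟩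
  rw [this, sat_zero]
  simp [supp]

lemma goal_inner (H : AddSubgroup G)
    (IH : ∀ L < H, ∀ (A : ι → Finset G) (R : Finset ρ) (p : ρ → G), Goal L A R p) :
    ∀ m : ℕ, ∀ (A : ι → Finset G) (R : Finset ρ) (p : ρ → G),
      Fintype.card ι * Fintype.card G ^ 2 < ∑ k, (A k).card ^ 2 + m → Goal H A R p := by
  have hbd : ∀ A : ι → Finset G, ∑ k, (A k).card ^ 2 ≤ Fintype.card ι * Fintype.card G ^ 2 := by
    intro A
    refine (sum_le_card_nsmul univ _ (Fintype.card G ^ 2)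
      (fun r _ => Nat.pow_le_pow_left (card_le_univ _) 2)).trans ?_
    simp
  intro m
  induction m with
  | zero => intro A R p h; have := hbd A; omega
  | succ m ihm =>
    intro A0 R p hm0
    rcases R.eq_empty_or_nonempty with rfl | hR
    · exact goal_empty H A0 p
    intro hne N hN hmax
    obtain ⟨A, hA⟩ : ∃ A : ι → Finset G, A = fun i => sat N (A0 i) := ⟨_, rfl⟩
    have hmu : ∀ L, N ≤ L → ∀ g, mu R.card A0 L g = mu R.card A L g := by
      intro L hL g
      unfold mu
      rw [hA, cnt_sat A0 hL]
    have hm : Fintype.card ι * Fintype.card G ^ 2 < ∑ k, (A k).card ^ 2 + (m + 1) := by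
      have : ∑ k, (A0 k).card ^ 2 ≤ ∑ k, (A k).card ^ 2 := by
        apply sum_le_sum
        intro k _
        rw [hA]
        exact Nat.pow_le_pow_left (card_le_card (subset_sat _ _)) 2
      omega
    have hper : ∀ k, Per N (A k) := by intro k; rw [hA]; exact per_sat _ _
    have hDne : (DD A R p H).Nonempty := by
      rw [hA, DD_sat A0 hR p hN]; exact sat_nonempty hne
    rw [← DD_sat A0 hR p hN, ← hA] at hmax ⊢
    rw [sum_congr rfl (fun g _ => by rw [hmu H hN g, hmu N le_rfl g])]
    clear hmu hm0 hne hA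
    clear A0
    obtain ⟨σ, y, hrep, hmaxσ⟩ := max_rep A hDne
    by_cases hbase : ∀ j, (∀ r ∈ R, σ r ≠ j) → ∀ r ∈ R, A j ⊆ A (σ r)
    · refine assemble A A R p hR hN hmax ?_ (fun g => le_rfl) (base_start A hrep hbase) ?_
      · intro L hL g
        rw [cnt_per hL hper, cnt_per le_rfl hper]
      · intro L hL c hc x hx hxc
        obtain ⟨τ, z, h1, rfl⟩ := mem_DD.1 hc
        exact direct_step A R p _ (Subset.refl _) hL.le h1 (IH L hL _ _ _)
          (by simp [L.zero_mem]) hx hxc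
    · push Not at hbase
      obtain ⟨j, hj, r0, hr0, hsub⟩ := hbase
      have hij : σ r0 ≠ j := hj r0 hr0
      have hsub2 : ¬ A (σ r0) ⊆ A j := by
        intro hs
        have hcl : (A (σ r0)).card < (A j).card := card_lt_card ⟨hs, hsub⟩
        have := hmaxσ (Function.update σ r0 j) y ⟨?_, ?_⟩
        · rw [← add_sum_erase R _ hr0, ← add_sum_erase R (fun r => (A (σ r)).card) hr0,
            Function.update_self] at this
          have he : ∑ r ∈ R.erase r0, (A (Function.update σ r0 j r)).card =
              ∑ r ∈ R.erase r0, (A (σ r)).card :=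
            sum_congr rfl (fun r hr => by rw [Function.update_of_ne (mem_erase.1 hr).1])
          rw [he] at this
          omega
        · intro a ha b hb e
          by_cases ea : a = r0
          · by_cases eb : b = r0
            · rw [ea, eb]
            · rw [ea, Function.update_self, Function.update_of_ne eb] at e
              exact absurd e.symm (hj b hb)
          · by_cases eb : b = r0
            · rw [eb, Function.update_self, Function.update_of_ne ea] at e
              exact absurd e (hj a ha)
            · rw [Function.update_of_ne ea, Function.update_of_ne eb] at e
              exact hrep.1 ha hb e
        · intro r hr
          by_cases e : r = r0
          · subst e; rw [Function.update_self]; exact ⟨hs (hrep.2 r hr).1, (hrep.2 r hr).2⟩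
          · rw [Function.update_of_ne e]; exact hrep.2 r hr
      have hmeas := unc_measure A hij hsub2 hsub
      have hDB : DD (unc A (σ r0) j) R p H ⊆ DD A R p H := DD_unc A hij R p H
      have hDBne : (DD (unc A (σ r0) j) R p H).Nonempty := by
        refine ⟨_, mem_DD.2 ⟨σ, y, ⟨hrep.1, fun r hr => ⟨?_, (hrep.2 r hr).2⟩⟩, rfl⟩⟩
        by_cases e : σ r = σ r0
        · have := (hrep.2 r hr).1
          rw [e] at this ⊢
          rw [unc_i]; exact mem_union_left _ this
        · rw [unc_o A e (hj r hr)]; exact (hrep.2 r hr).1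
      refine assemble A (unc A (σ r0) j) R p hR hN hmax
        (fun L hL g => cnt_unc_per hij hL hper g) (fun g => cnt_unc_le A hij H g) ?_ ?_
      · have hperC := per_stb (DD (unc A (σ r0) j) R p H)
        have hLH : stb (DD (unc A (σ r0) j) R p H) ≤ H := by
          obtain ⟨d, hd⟩ := hDBne
          intro h hh
          have h1 := hperC h hh d hd
          have := H.sub_mem (DD_coset h1) (DD_coset hd)
          convert this using 1; abel
        have key := ihm (unc A (σ r0) j) R p (by omega) hDBne _ hLH (by
          rw [sat_eq_of_per hperC]; exact fun M hM => le_stb_of_per hM)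
        rw [sat_eq_of_per hperC, sum_sub_distrib] at key
        exact ⟨_, hLH, _, hDB, hperC, by linarith⟩
      · intro L hL c hc x hx hxc
        exact step1 A hij R p hL.le (IH L hL) hc hx hxc

theorem goal_main : ∀ k : ℕ, ∀ H : AddSubgroup G, oc H ≤ k →
    ∀ (A : ι → Finset G) (R : Finset ρ) (p : ρ → G), Goal H A R p := by
  intro k
  induction k with
  | zero => intro H h; have := oc_pos H; omega
  | succ k ih =>
    intro H hH A R p
    exact goal_inner H (fun L hL => ih L (by have := oc_lt hL; omega))
      (Fintype.card ι * Fintype.card G ^ 2 + 1) A R p (by omega)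

lemma mem_DD_top {t n : ℕ} (A : Fin t → Finset G) (g : G) :
    g ∈ DD A (univ : Finset (Fin n)) 0 ⊤ ↔ ∃ (s : Finset (Fin t)) (f : Fin t → G),
      s.card = n ∧ (∀ i ∈ s, f i ∈ A i) ∧ ∑ i ∈ s, f i = g := by
  rw [mem_DD]
  constructor
  · rintro ⟨σ, y, ⟨hσ, hy⟩, rfl⟩
    have hinj : Function.Injective σ := fun a b e => hσ (by simp) (by simp) e
    refine ⟨univ.image σ, Function.extend σ y 0, ?_, ?_, ?_⟩
    · rw [card_image_of_injective _ hinj]; simp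
    · intro i hi
      obtain ⟨r, _, rfl⟩ := mem_image.1 hi
      rw [hinj.extend_apply]; exact (hy r (mem_univ _)).1
    · rw [sum_image (fun a _ b _ e => hinj e)]
      exact sum_congr rfl (fun r _ => hinj.extend_apply _ _ _)
  · rintro ⟨s, f, hs, hf, rfl⟩
    refine ⟨s.orderEmbOfFin hs, fun r => f (s.orderEmbOfFin hs r), ⟨?_, ?_⟩, ?_⟩
    · intro a _ b _ e; exact (s.orderEmbOfFin hs).injective e
    · intro r _
      exact ⟨hf _ (orderEmbOfFin_mem s hs r), AddSubgroup.mem_top _⟩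
    · conv_rhs => rw [← image_orderEmbOfFin_univ s hs]
      rw [sum_image (fun a _ b _ e => (s.orderEmbOfFin hs).injective e)]

theorem dgm_aux (n : ℕ) (hn : n = Fintype.card G)
    (t : ℕ) (ht : n ≤ t) (A : Fin t → Finset G) (hA : ∀ i, (A i).Nonempty)
    (T : Set G)
    (hT : T = {g | ∃ (s : Finset (Fin t)) (f : Fin t → G),
      s.card = n ∧ (∀ i ∈ s, f i ∈ A i) ∧ ∑ i ∈ s, f i = g})
    (hne : T.Nonempty)
    (hstab : ∀ h : G, (h + ·) '' T = T → h = 0)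
    (hmult : ∀ a : G, (Finset.univ.filter (fun i => a ∈ A i)).card ≤ n) :
    (Nat.card T : ℤ) ≥ 1 - n + ∑ i, ((A i).card : ℤ) := by
  have hn0 : 0 < n := by rw [hn]; exact Fintype.card_pos
  obtain ⟨D, hD⟩ : ∃ D, D = DD A (univ : Finset (Fin n)) 0 ⊤ := ⟨_, rfl⟩
  have hTD : T = (D : Set G) := by
    ext g
    rw [mem_coe, hD, mem_DD_top, hT]; rfl
  have hcard : Nat.card T = D.card := by rw [hTD]; simp
  have hDne : D.Nonempty := by rw [hTD] at hne; exact_mod_cast hne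
  have hmax : ∀ L, Per L D → L ≤ ⊥ := by
    intro L hL x hx
    rw [AddSubgroup.mem_bot]
    apply hstab
    rw [hTD]
    ext g
    constructor
    · rintro ⟨d, hd, rfl⟩; exact hL x hx d hd
    · intro hg
      exact ⟨-x + g, hL _ (L.neg_mem hx) g hg, by simp⟩
  have hsatb : sat ⊥ D = D := sat_eq_of_per (by
    intro x hx c hc
    rw [AddSubgroup.mem_bot] at hx
    simpa [hx] using hc)
  have key := goal_main (oc (⊤ : AddSubgroup G)) ⊤ le_rfl A (univ : Finset (Fin n)) 0
    (by rw [← hD]; exact hDne) ⊥ bot_le (by rw [← hD, hsatb]; exact hmax)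
  rw [← hD, hsatb] at key
  have hoct : oc (⊤ : AddSubgroup G) = n := by rw [hn]; simp [oc]
  have hocb : oc (⊥ : AddSubgroup G) = 1 := by
    unfold oc
    rw [card_eq_one]
    exact ⟨0, by ext g; simp⟩
  have hsupp : supp (univ : Finset (Fin n)) (0 : Fin n → G) ⊤ = univ := by
    ext g
    simp only [supp, mem_filter, mem_univ, true_and, AddSubgroup.mem_top, and_true, iff_true]
    exact ⟨⟨0, hn0⟩, trivial⟩
  have hct : ∀ g, mu n A ⊤ g = n := by
    intro g
    have : cnt A ⊤ g = t := by
      unfold cnt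
      rw [filter_true_of_mem]
      · simp
      · intro i _; obtain ⟨a, ha⟩ := hA i; exact ⟨a, ha, AddSubgroup.mem_top _⟩
    unfold mu; omega
  have hcb : ∀ g, mu n A ⊥ g = ((univ.filter (fun i => g ∈ A i)).card : ℤ) := by
    intro g
    have : cnt A ⊥ g = (univ.filter (fun i => g ∈ A i)).card := by
      simp [cnt, sub_eq_zero]
    have := hmult g
    unfold mu; omega
  have hdc : ∑ g : G, ((univ.filter (fun i => g ∈ A i)).card : ℤ) = ∑ i, ((A i).card : ℤ) := by
    have : ∀ g : G, ((univ.filter (fun i => g ∈ A i)).card : ℤ) =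
        ∑ i, if g ∈ A i then (1 : ℤ) else 0 := fun g => by rw [sum_boole]
    rw [sum_congr rfl (fun g _ => this g), sum_comm]
    apply sum_congr rfl
    intro i _
    rw [sum_boole]; simp
  simp only [card_univ, Fintype.card_fin] at key
  rw [hoct, hocb, hsupp, sum_sub_distrib, sum_congr rfl (fun g _ => hct g),
    sum_congr rfl (fun g _ => hcb g), hdc, sum_const, card_univ, ← hn] at key
  rw [hcard]
  simp only [nsmul_eq_mul, Nat.cast_one, mul_one] at key
  linarith

end DGM

/-- DGM with trivial stabilizer: `|Σ_n(A)| ≥ 1 - n + Σ_i |A_i|`; in particular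
`|Σ_n(A)| ≤ n - 1` forces `Σ_i |A_i| ≤ 2n - 2`. -/
theorem dgm_trivial_stabilizer {G : Type*} [AddCommGroup G] [Fintype G] [DecidableEq G]
    (n : ℕ) (hn : n = Fintype.card G)
    (t : ℕ) (ht : n ≤ t) (A : Fin t → Finset G) (hA : ∀ i, (A i).Nonempty)
    (T : Set G)
    (hT : T = {g | ∃ (s : Finset (Fin t)) (f : Fin t → G),
      s.card = n ∧ (∀ i ∈ s, f i ∈ A i) ∧ ∑ i ∈ s, f i = g})
    (hne : T.Nonempty)
    (hstab : ∀ h : G, (h + ·) '' T = T → h = 0)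
    (hmult : ∀ a : G, (Finset.univ.filter (fun i => a ∈ A i)).card ≤ n) :
    ((Nat.card T : ℤ) ≥ 1 - n + ∑ i, ((A i).card : ℤ)) ∧
      (Nat.card T ≤ n - 1 → ∑ i, (A i).card ≤ 2 * n - 2) := by
  have hn0 : 0 < n := by rw [hn]; exact Fintype.card_pos
  have key : (Nat.card T : ℤ) ≥ 1 - n + ∑ i, ((A i).card : ℤ) := by
    refine DGM.dgm_aux n hn t ht A hA T hT hne hstab (fun a => ?_)
    convert hmult a
  refine ⟨key, fun h => ?_⟩
  rw [← Nat.cast_sum] at key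
  omega
end
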